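/- arXiv:1504.06748 — 2 statements merged into one kernel-verified Lean document; each statement's English description precedes it below -/
import Mathlib

section
/- Let S be a semioval of size q + 3 in PG(2,q). Then one of the following holds: q = 5 and S is the symmetric difference of two lines with one further point removed from both lines; or q = 9 and S is projectively equivalent to the Blokhuis semioval; or p = 3 and S is a (q+3,3)-arc, i.e. every line of PG(2,q) meets S in at most 3 points. -/
/-! Common setup: the Desarguesian projective plane `PG(2,q)` over a finite field `F = GF(q)`.
Points are the projective points of `F³`; lines are the 2-dimensional linear subspaces of `F³`,
with incidence given by containment. -/

/-- Points of `PG(2,F)`. -/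
abbrev PGPoint (F : Type*) [Field F] := Projectivization F (Fin 3 → F)

/-- Lines of `PG(2,F)`: the 2-dimensional linear subspaces of `F³`. -/
abbrev PGLine (F : Type*) [Field F] := {W : Submodule F (Fin 3 → F) // Module.finrank F W = 2}

/-- Incidence between a point and a line of `PG(2,F)`. -/
def pgMem {F : Type*} [Field F] (P : PGPoint F) (L : PGLine F) : Prop :=
  P.submodule ≤ L.val

/-- The number of points of the point set `B` lying on the line `L`;
`L` is a *`k`-secant* of `B` if `nsec B L = k`, a *tangent* if `k = 1`,
a *bisecant* if `k = 2` and a *trisecant* if `k = 3`. -/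
noncomputable def nsec {F : Type*} [Field F] (B : Set (PGPoint F)) (L : PGLine F) : ℕ :=
  {P ∈ B | pgMem P L}.ncard

/-- A blocking set: a point set meeting every line. -/
def isBlocking {F : Type*} [Field F] (B : Set (PGPoint F)) : Prop :=
  ∀ L : PGLine F, ∃ P ∈ B, pgMem P L

/-- A minimal blocking set: every point is essential. -/
def isMinimalBlocking {F : Type*} [Field F] (B : Set (PGPoint F)) : Prop :=
  isBlocking B ∧ ∀ P ∈ B, ¬ isBlocking (B \ {P})

/-- `B` is a blocking set of Rédei type with Rédei line `ℓ`: a blocking set of size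
`q + N ≤ 2q` such that `ℓ` meets `B` in exactly `N = |B| − q` points. -/
def isRedeiWithLine {F : Type*} [Field F] (q : ℕ) (B : Set (PGPoint F)) (ℓ : PGLine F) : Prop :=
  isBlocking B ∧ B.ncard ≤ 2 * q ∧ nsec B ℓ + q = B.ncard

/-- A semioval: through each of its points there passes exactly one tangent. -/
def isSemioval {F : Type*} [Field F] (S : Set (PGPoint F)) : Prop :=
  ∀ P ∈ S, ∃! t : PGLine F, pgMem P t ∧ nsec S t = 1

/-- A vector of `F³` with some coordinate equal to `1` is nonzero. -/
lemma vec_ne_zero_of_coord_one {F : Type*} [Field F] (v : Fin 3 → F) (i : Fin 3)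
    (hvi : v i = 1) : v ≠ 0 := by
  intro h0; rw [h0] at hvi; simp at hvi

/-- The Blokhuis semioval in `PG(2,q)`, `q` odd: the point set
`{(0,1,s), (s,0,1), (1,s,0) : −s is not a square in GF(q)}` (homogeneous coordinates). -/
def blokhuisSemioval (F : Type*) [Field F] : Set (PGPoint F) :=
  {P : PGPoint F | ∃ s : F, ¬ IsSquare (-s) ∧
    (P = Projectivization.mk F ![0, 1, s] (vec_ne_zero_of_coord_one _ 1 rfl) ∨
     P = Projectivization.mk F ![s, 0, 1] (vec_ne_zero_of_coord_one _ 2 rfl) ∨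
     P = Projectivization.mk F ![1, s, 0] (vec_ne_zero_of_coord_one _ 0 rfl))}

/-- Two point sets of `PG(2,q)` are projectively equivalent if one is the image of the other
under an element of `PGL(3,q)`, i.e. under the map induced by an invertible linear map of `F³`. -/
def projEquivalent {F : Type*} [Field F] (A B : Set (PGPoint F)) : Prop :=
  ∃ g : (Fin 3 → F) ≃ₗ[F] (Fin 3 → F),
    Projectivization.map (σ := RingHom.id F) g.toLinearMap g.injective '' A = B

/-- `S` is the symmetric difference of two lines with one further point removed from both
lines. -/
def isSymmDiffOfTwoLinesMinusTwoPoints {F : Type*} [Field F] (S : Set (PGPoint F))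
    (ℓ₁ ℓ₂ : PGLine F) : Prop :=
  ℓ₁ ≠ ℓ₂ ∧ ∃ P₁ P₂ : PGPoint F,
    pgMem P₁ ℓ₁ ∧ ¬ pgMem P₁ ℓ₂ ∧ pgMem P₂ ℓ₂ ∧ ¬ pgMem P₂ ℓ₁ ∧
    S = (({P | pgMem P ℓ₁} \ {P | pgMem P ℓ₂}) ∪ ({P | pgMem P ℓ₂} \ {P | pgMem P ℓ₁}))
        \ {P₁, P₂}

/-!
Take an `(n + 1)`-secant of a semioval of size `q + n`, `n ≤ 3`, as the line at infinity. The
affine part is then the graph of a function `f` on `F` minus one point `x₀`, and `f x₀` is chosen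
so that `f` has sum `0`. Multiplying the slopes seen from an affine point, as in Segre's lemma of
tangents, shows that the slopes that repeat there, together with the slope to the centre
`(x₀, f x₀)`, are the roots of the first polar, with respect to the slope of the tangent, of the
binary form whose zeros are the directions in the semioval. One root determines this polar, so all
points on a line with a repeated slope see the same roots; if the line missed the centre, these
would be more than the degree allows. Hence the affine points lie on `(n + 1)`-secants through the
centre.

Consequently the `(n + 1)`-secants partition the semioval, there are two or three of them, and
`q = n + 2` or `q = 2 n + 3`. In the second case they form a triangle, and by Menelaus no three
parameters on different sides have product `-1`; products over one side then identify the parameters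
with square classes.
-/

section

open Finset Polynomial

section FiniteField

variable {F : Type*} [Field F] [Fintype F]

lemma injective_of_injOn_compl_singleton (hF : 2 < Fintype.card F) {g : F → F} {x₀ : F}
    (hg : Set.InjOn g {x₀}ᶜ) (hsum : ∑ x, g x = 0) : Function.Injective g := by
  classical
  have hg' : Set.InjOn g ↑({x₀}ᶜ : Finset F) := by simpa using hg
  have himage : #(({x₀}ᶜ : Finset F).image g)ᶜ = 1 := by
    rw [card_compl, card_image_of_injOn hg', card_compl, card_singleton]
    omega
  obtain ⟨c, hc⟩ := card_eq_one.mp himage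
  have hzero : ∑ x : F, x = 0 := by simpa using FiniteField.sum_pow_lt_card_sub_one F 1 (by omega)
  have hx₀ : g x₀ = c := by
    rw [← sum_add_sum_compl (({x₀}ᶜ : Finset F).image g), sum_image hg', hc, sum_singleton] at hzero
    rw [← sum_compl_add_sum {x₀}, sum_singleton] at hsum
    linear_combination hsum - hzero
  have hmissed (x : F) (hx : x ≠ x₀) : g x ≠ g x₀ := by
    intro h
    have : c ∈ (({x₀}ᶜ : Finset F).image g)ᶜ := hc ▸ mem_singleton_self c
    exact mem_compl.mp this (mem_image.mpr ⟨x, by simpa using hx, h.trans hx₀⟩)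
  intro x y hxy
  rcases eq_or_ne x x₀ with rfl | hx <;> rcases eq_or_ne y x with h | hy
  · exact h.symm
  · exact absurd hxy.symm (hmissed y hy)
  · exact h.symm
  · rcases eq_or_ne y x₀ with rfl | hy₀
    · exact absurd hxy (hmissed x hx)
    · exact hg hx hy₀ hxy

variable [DecidableEq F]

lemma prod_compl_zero_eq_neg_one : ∏ z ∈ ({0}ᶜ : Finset F), z = -1 := by
  rw [← Units.val_one, ← Units.val_neg, ← FiniteField.prod_univ_units_id_eq_neg_one (K := F),
    Units.coe_prod]
  symm
  refine prod_bij (fun u _ => (u : F)) ?_ ?_ ?_ fun _ _ => rfl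
  · simp
  · exact fun _ _ _ _ h => Units.ext h
  · exact fun z hz => ⟨Units.mk0 z (by simpa using hz), mem_univ _, rfl⟩

lemma prod_compl_singleton_sub_eq_neg_one {g : F → F} (hg : Function.Injective g) (x : F) :
    ∏ y ∈ {x}ᶜ, (g x - g y) = -1 := by
  rw [← prod_compl_zero_eq_neg_one]
  refine prod_nbij (g x - g ·) (fun y hy => ?_) (fun y _ z _ h => hg (sub_right_injective h))
    (fun z hz => ?_) fun _ _ => rfl
  · simpa [sub_eq_zero, hg.eq_iff, eq_comm] using hy
  · obtain ⟨y, hy⟩ := Finite.injective_iff_surjective.mp hg (g x - z)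
    have hyx : y ≠ x := by
      rintro rfl
      exact (show z ≠ 0 by simpa using hz) (by linear_combination hy)
    exact ⟨y, by simpa using hyx, by simp [hy]⟩

lemma prod_sub_slope_eq_one {f : F → F} {d : F} (hd : Function.Injective fun y => f y - d * y)
    (x : F) : ∏ y ∈ {x}ᶜ, (d - slope f x y) = 1 := by
  have hsub : ∏ y ∈ ({x}ᶜ : Finset F), (x - y) = -1 :=
    prod_compl_singleton_sub_eq_neg_one Function.injective_id x
  have hline := prod_compl_singleton_sub_eq_neg_one (neg_injective.comp hd) x
  have hfactor : ∀ y ∈ ({x}ᶜ : Finset F),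
      -(f x - d * x) - -(f y - d * y) = (d - slope f x y) * (x - y) := by
    intro y hy
    have hyx : y - x ≠ 0 := sub_ne_zero.mpr (by simpa using hy)
    rw [slope_def_field]
    field_simp
    ring
  simp only [Function.comp_apply] at hline
  rw [prod_congr rfl hfactor, prod_mul_distrib, hsub] at hline
  linear_combination -hline

end FiniteField

section Polar

variable {F : Type*} [Field F]

/-- The first polar, with respect to `t`, of the binary form of degree `#D + 1` with roots
`D ∪ {∞}`, dehomogenised.  Writing `m` for the monic polynomial with root set `D` and `n = #D`,
it is `(n + 1) m - (X - t) m'`. -/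
noncomputable def polar (D : Finset F) (t : F) : F[X] :=
  (#D + 1 : F[X]) * Lagrange.nodal D id - (X - C t) * derivative (Lagrange.nodal D id)

lemma eq_of_isRoot_polar {D : Finset F} {s t u : F} (hD : (#D + 1 : F) ≠ 0) (hs : s ∉ D)
    (ht : (polar D t).IsRoot s) (hu : (polar D u).IsRoot s) : t = u := by
  have hnodal : eval s (Lagrange.nodal D id) ≠ 0 := by
    rw [Lagrange.eval_nodal, prod_ne_zero_iff]
    exact fun d hd => sub_ne_zero.mpr fun h => hs (h ▸ hd)
  simp only [polar, IsRoot, eval_sub, eval_mul, eval_add, eval_natCast, eval_one, eval_X,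
    eval_C] at ht hu
  by_cases hderiv : eval s (derivative (Lagrange.nodal D id)) = 0
  · simp [hderiv, hD, hnodal] at ht
  · exact mul_right_cancel₀ hderiv (by linear_combination ht - hu)

lemma isRoot_polar_self {D : Finset F} {t : F} (hD : (#D + 1 : F) = 0) : (polar D t).IsRoot t := by
  simp [polar, hD]

lemma degree_natDegree_mul_sub_lt (m : F[X]) (t : F) :
    ((m.natDegree : F[X]) * m - (X - C t) * derivative m).degree <
      (m.natDegree : WithBot ℕ) := by
  rw [degree_lt_iff_coeff_zero]
  intro k hk
  have hsucc : m.coeff (k + 1) = 0 := coeff_eq_zero_of_natDegree_lt (by omega)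
  have hcoeff : (derivative m).coeff k = 0 := by rw [coeff_derivative, hsucc, zero_mul]
  rw [sub_mul, coeff_sub, coeff_sub, coeff_C_mul, hcoeff, coeff_natCast_mul]
  rcases hk.eq_or_lt with rfl | hlt
  · cases hn : m.natDegree with
    | zero => simp
    | succ j => simp [coeff_X_mul, coeff_derivative, mul_comm]
  · cases k with
    | zero => omega
    | succ j => simp [coeff_X_mul, coeff_derivative, coeff_eq_zero_of_natDegree_lt hlt]

variable [DecidableEq F]

lemma prod_X_sub_C_eq_polar {D : Finset F} {E : Multiset F} {t : F} (hE : E.card = #D)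
    (h : ∀ d ∈ D, (E.map (d - ·)).prod = -((d - t) * ∏ d' ∈ D.erase d, (d - d'))) :
    (E.map (X - C ·)).prod = polar D t := by
  set m := Lagrange.nodal D id with hm
  have hmonic : m.Monic := Lagrange.nodal_monic
  have hdegree : m.natDegree = #D := Lagrange.natDegree_nodal
  have hmonicE : (E.map (X - C ·)).prod.Monic :=
    monic_multiset_prod_of_monic _ _ fun _ _ => monic_X_sub_C _
  have hdegreeE : (E.map (X - C ·)).prod.natDegree = #D := by
    rw [natDegree_multiset_prod_X_sub_C_eq_card, hE]
  refine eq_of_degree_sub_lt_of_eval_finset_eq D ?_ fun d hd => ?_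
  · rw [show (E.map (X - C ·)).prod - polar D t = ((E.map (X - C ·)).prod - m)
        - ((m.natDegree : F[X]) * m - (X - C t) * derivative m) by rw [polar, hdegree]; ring]
    refine (degree_sub_le _ _).trans_lt (max_lt ?_ ?_)
    · rw [← hdegreeE, ← degree_eq_natDegree hmonicE.ne_zero]
      refine degree_sub_lt_left ?_ hmonicE.ne_zero (hmonicE.trans hmonic.symm)
      rw [degree_eq_natDegree hmonicE.ne_zero, degree_eq_natDegree hmonic.ne_zero, hdegree,
        hdegreeE]
    · exact hdegree ▸ degree_natDegree_mul_sub_lt m t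
  · have hroot : eval d m = 0 := Lagrange.eval_nodal_at_node (v := id) hd
    have hderiv : eval d (derivative m) = ∏ d' ∈ D.erase d, (d - d') :=
      (Lagrange.eval_nodal_derivative_eval_node_eq (v := id) hd).trans Lagrange.eval_nodal
    rw [eval_multiset_prod, Multiset.map_map, polar, ← hm]
    simp only [Function.comp_apply, eval_sub, eval_mul, eval_X, eval_C, hroot, hderiv, mul_zero,
      zero_sub, h d hd]

end Polar

section Slopes

variable {F : Type*} [Field F]

lemma slope_eq_iff_sub_mul_eq {f : F → F} {x y s : F} (hyx : y ≠ x) :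
    slope f x y = s ↔ f y - s * y = f x - s * x := by
  rw [slope_def_field, div_eq_iff (sub_ne_zero.mpr hyx)]
  constructor <;> intro h <;> linear_combination h

variable [Fintype F] [DecidableEq F]

lemma card_eq_card_of_slopes_eq {f : F → F} {D : Finset F} {E : Multiset F} {x t : F} (ht : t ∉ D)
    (hslopes : ({x}ᶜ : Finset F).val.map (slope f x) = (insert t D)ᶜ.val + E) :
    E.card = #D := by
  have hcard := congrArg Multiset.card hslopes
  rw [Multiset.card_map, Multiset.card_add, card_val, card_val, card_compl, card_compl,
    card_singleton, card_insert_of_notMem ht] at hcard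
  have := card_insert_of_notMem ht ▸ card_le_univ (insert t D)
  omega

lemma prod_X_sub_C_eq_polar_of_slopes_eq {f : F → F} {D : Finset F} {E : Multiset F} {x t : F}
    (ht : t ∉ D) (hD : ∀ d ∈ D, Function.Injective fun y => f y - d * y)
    (hslopes : ({x}ᶜ : Finset F).val.map (slope f x) = (insert t D)ᶜ.val + E) :
    (E.map (X - C ·)).prod = polar D t := by
  refine prod_X_sub_C_eq_polar (card_eq_card_of_slopes_eq ht hslopes) fun d hd => ?_
  have hdt : t ∉ D.erase d := fun h => ht (mem_of_mem_erase h)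
  have herase : (insert t D).erase d = insert t (D.erase d) :=
    erase_insert_of_ne (ne_of_mem_of_not_mem hd ht).symm
  have hslope : (∏ s ∈ (insert t D)ᶜ, (d - s)) * (E.map (d - ·)).prod = 1 := by
    rw [← prod_sub_slope_eq_one (hD d hd) x, prod_eq_multiset_prod, prod_eq_multiset_prod,
      ← Multiset.prod_add, ← Multiset.map_add, ← hslopes, Multiset.map_map]
    rfl
  have hwilson : (∏ s ∈ (insert t D)ᶜ, (d - s)) * ((d - t) * ∏ d' ∈ D.erase d, (d - d')) = -1 := by
    have hsplit : ({d}ᶜ : Finset F) = (insert t D)ᶜ ∪ insert t (D.erase d) := by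
      ext y
      rw [← herase]
      by_cases hy : y = d
      · simp [hy, hd]
      · simpa [hy] using (em (y = t ∨ y ∈ D)).symm
    rw [← prod_insert hdt, ← prod_union, ← hsplit]
    · exact prod_compl_singleton_sub_eq_neg_one Function.injective_id d
    · exact herase ▸ disjoint_compl_left.mono_right (erase_subset _ _)
  have hne := left_ne_zero_of_mul_eq_one hslope
  exact mul_left_cancel₀ hne (by linear_combination hslope + hwilson)

/-- The abscissae, other than `x₀`, of the points of the graph of `f` on the line of slope `s`
through `(x, f x)`. -/
def chord (f : F → F) (x₀ x s : F) : Finset F :=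
  {y ∈ {x₀}ᶜ | f y - s * y = f x - s * x}

/-- The multiset of slopes of the lines joining `(x, f x)` to the other points of the graph of `f`
over `{x₀}ᶜ`. -/
noncomputable def slopes (f : F → F) (x₀ x : F) : Multiset F :=
  ({x₀, x}ᶜ : Finset F).val.map (slope f x)

/-- The repetitions in `slopes f x₀ x`: a line through `(x, f x)` containing `k ≥ 2` points of the
graph over `{x₀}ᶜ` contributes its slope `k - 2` times. -/
noncomputable def repeatedSlopes (f : F → F) (x₀ x : F) : Multiset F :=
  slopes f x₀ x - (slopes f x₀ x).dedup

/-- Among the lines through `(x, f x)`, those meeting the graph of `f` over `{x₀}ᶜ` in no other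
point are the ones with slope in `D` and one further line, of slope `t`. -/
def HasTangentSlope (f : F → F) (x₀ : F) (D : Finset F) (x t : F) : Prop :=
  t ∉ D ∧ ∀ s, #(chord f x₀ x s) = 1 ↔ s ∈ insert t D

variable {f : F → F} {x₀ x y s t u : F} {D : Finset F}

lemma mem_chord : y ∈ chord f x₀ x s ↔ y ≠ x₀ ∧ f y - s * y = f x - s * x := by
  simp [chord]

lemma self_mem_chord (hx : x ≠ x₀) : x ∈ chord f x₀ x s :=
  mem_chord.mpr ⟨hx, rfl⟩

lemma chord_eq_of_mem (hy : y ∈ chord f x₀ x s) : chord f x₀ y s = chord f x₀ x s := by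
  rw [chord, chord, (mem_chord.mp hy).2]

lemma count_slopes (hx : x ≠ x₀) : (slopes f x₀ x).count s = #(chord f x₀ x s) - 1 := by
  rw [← card_erase_of_mem (self_mem_chord hx), slopes, Multiset.count_map, ← filter_val, card_val]
  congr 1
  ext y
  rcases eq_or_ne y x with rfl | hyx
  · simp
  · simp [mem_chord, hyx, ← slope_eq_iff_sub_mul_eq hyx, eq_comm]

lemma count_repeatedSlopes (hx : x ≠ x₀) :
    (repeatedSlopes f x₀ x).count s = #(chord f x₀ x s) - 2 := by
  simp only [repeatedSlopes, Multiset.count_sub, Multiset.count_dedup, ← Multiset.count_pos,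
    count_slopes hx]
  split_ifs <;> omega

lemma mem_repeatedSlopes (hx : x ≠ x₀) :
    s ∈ repeatedSlopes f x₀ x ↔ 3 ≤ #(chord f x₀ x s) := by
  rw [← Multiset.count_pos, count_repeatedSlopes hx]
  omega

lemma map_slope_compl_singleton (hx : x ≠ x₀) :
    ({x}ᶜ : Finset F).val.map (slope f x) = slope f x x₀ ::ₘ slopes f x₀ x := by
  have hinsert : ({x}ᶜ : Finset F) = cons x₀ {x₀, x}ᶜ (by simp) := by
    ext y
    rcases eq_or_ne y x₀ with rfl | _ <;> simp_all [eq_comm]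
  rw [hinsert, cons_val, Multiset.map_cons, slopes]

lemma mem_chord_of_slope_eq (hx : x ≠ x₀) (hy : y ≠ x₀) (hxy : slope f y x₀ = slope f x x₀) :
    y ∈ chord f x₀ x (slope f x x₀) :=
  mem_chord.mpr ⟨hy, ((slope_eq_iff_sub_mul_eq hy.symm).mp hxy).symm.trans
    ((slope_eq_iff_sub_mul_eq hx.symm).mp rfl)⟩

lemma slope_ne_of_mem_chord (hx : x ≠ x₀) (hs : slope f x x₀ ≠ s) (hy : y ∈ chord f x₀ x s) :
    slope f y x₀ ≠ s := by
  obtain ⟨hy₀, hyx⟩ := mem_chord.mp hy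
  rw [Ne, slope_eq_iff_sub_mul_eq hx.symm] at hs
  rwa [Ne, slope_eq_iff_sub_mul_eq hy₀.symm, hyx]

lemma slope_injOn_chord (hx : x ≠ x₀) (hs : slope f x x₀ ≠ s) :
    Set.InjOn (slope f · x₀) (chord f x₀ x s) := by
  intro y hy z hz hyz
  have hslope : slope f y x₀ - s ≠ 0 := sub_ne_zero.mpr (slope_ne_of_mem_chord hx hs hy)
  obtain ⟨hy₀, hyx⟩ := mem_chord.mp hy
  obtain ⟨hz₀, hzx⟩ := mem_chord.mp hz
  have hzy := (mem_chord.mp (mem_chord_of_slope_eq hy₀ hz₀ hyz.symm)).2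
  exact mul_left_cancel₀ hslope (by linear_combination hzy + hyx - hzx)

namespace HasTangentSlope

lemma injOn_sub_mul (h : ∀ x ≠ x₀, ∃ t, HasTangentSlope f x₀ D x t) {d : F} (hd : d ∈ D) :
    Set.InjOn (fun y => f y - d * y) {x₀}ᶜ := by
  intro x hx y hy hxy
  obtain ⟨t, -, ht⟩ := h x hx
  obtain ⟨z, hz⟩ := card_eq_one.mp ((ht d).mpr (mem_insert_of_mem hd))
  have hxz := hz ▸ self_mem_chord (f := f) (s := d) hx
  have hyz : y ∈ ({z} : Finset F) := hz ▸ mem_chord.mpr ⟨hy, hxy.symm⟩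
  exact (mem_singleton.mp hxz).trans (mem_singleton.mp hyz).symm

lemma dedup_slopes (h : HasTangentSlope f x₀ D x t) (hx : x ≠ x₀) :
    (slopes f x₀ x).dedup = (insert t D)ᶜ.val := by
  refine (Multiset.Nodup.ext (Multiset.nodup_dedup _) (nodup _)).mpr fun s => ?_
  have hpos := card_pos.mpr ⟨x, self_mem_chord (f := f) (s := s) hx⟩
  rw [Multiset.mem_dedup, ← Multiset.count_pos, count_slopes hx, mem_val, mem_compl, ← h.2 s]
  omega

lemma map_slope_eq (h : HasTangentSlope f x₀ D x t) (hx : x ≠ x₀) :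
    ({x}ᶜ : Finset F).val.map (slope f x) =
      (insert t D)ᶜ.val + slope f x x₀ ::ₘ repeatedSlopes f x₀ x := by
  rw [map_slope_compl_singleton hx, Multiset.add_cons, ← h.dedup_slopes hx, repeatedSlopes,
    add_tsub_cancel_of_le (Multiset.dedup_le _)]

lemma two_lt_card (h : HasTangentSlope f x₀ D x t) (hD : 2 ≤ #D) : 2 < Fintype.card F :=
  hD.trans_lt (card_lt_univ_of_notMem h.1)

lemma injective_sub_mul (h : ∀ x ≠ x₀, ∃ t, HasTangentSlope f x₀ D x t) (hf : ∑ x, f x = 0)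
    (hD : 2 ≤ #D) {d : F} (hd : d ∈ D) : Function.Injective fun y => f y - d * y := by
  obtain ⟨x, hx⟩ := exists_ne x₀
  obtain ⟨t, ht⟩ := h x hx
  have hF := ht.two_lt_card hD
  refine injective_of_injOn_compl_singleton hF (injOn_sub_mul h hd) ?_
  have hzero : ∑ x : F, x = 0 := by simpa using FiniteField.sum_pow_lt_card_sub_one F 1 (by omega)
  rw [sum_sub_distrib, ← mul_sum, hf, hzero, mul_zero, sub_zero]

lemma prod_X_sub_C_eq_polar (h : ∀ x ≠ x₀, ∃ t, HasTangentSlope f x₀ D x t) (hf : ∑ x, f x = 0)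
    (hD : 2 ≤ #D) (ht : HasTangentSlope f x₀ D x t) (hx : x ≠ x₀) :
    ((slope f x x₀ ::ₘ repeatedSlopes f x₀ x).map (X - C ·)).prod = polar D t :=
  prod_X_sub_C_eq_polar_of_slopes_eq ht.1 (fun _ hd => injective_sub_mul h hf hD hd)
    (ht.map_slope_eq hx)

lemma isRoot_polar (h : ∀ x ≠ x₀, ∃ t, HasTangentSlope f x₀ D x t) (hf : ∑ x, f x = 0)
    (hD : 2 ≤ #D) (ht : HasTangentSlope f x₀ D x t) (hx : x ≠ x₀) :
    (polar D t).IsRoot s ↔ s ∈ slope f x x₀ ::ₘ repeatedSlopes f x₀ x := by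
  rw [← prod_X_sub_C_eq_polar h hf hD ht hx, ← mem_roots
    (monic_multiset_prod_of_monic _ _ fun _ _ => monic_X_sub_C _).ne_zero,
    roots_multiset_prod_X_sub_C]

lemma notMem_of_mem_repeatedSlopes (ht : HasTangentSlope f x₀ D x t) (hx : x ≠ x₀)
    (hs : s ∈ repeatedSlopes f x₀ x) : s ∉ insert t D := by
  rw [mem_repeatedSlopes hx] at hs
  rw [← ht.2]
  omega

lemma slopes_eq_of_mem_chord (h : ∀ x ≠ x₀, ∃ t, HasTangentSlope f x₀ D x t)
    (hf : ∑ x, f x = 0) (hD : 2 ≤ #D) (hchar : (#D + 1 : F) ≠ 0) (hx : x ≠ x₀)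
    (hs : s ∈ repeatedSlopes f x₀ x) (hy : y ∈ chord f x₀ x s) :
    slope f y x₀ ::ₘ repeatedSlopes f x₀ y = slope f x x₀ ::ₘ repeatedSlopes f x₀ x := by
  have hy₀ := (mem_chord.mp hy).1
  obtain ⟨t, ht⟩ := h x hx
  obtain ⟨u, hu⟩ := h y hy₀
  have hsy : s ∈ repeatedSlopes f x₀ y := by
    rwa [mem_repeatedSlopes hy₀, chord_eq_of_mem hy, ← mem_repeatedSlopes hx]
  have hsD : s ∉ D := fun hsD => ht.notMem_of_mem_repeatedSlopes hx hs (mem_insert_of_mem hsD)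
  have hut : u = t := eq_of_isRoot_polar hchar hsD
    ((isRoot_polar h hf hD hu hy₀).mpr (Multiset.mem_cons_of_mem hsy))
    ((isRoot_polar h hf hD ht hx).mpr (Multiset.mem_cons_of_mem hs))
  rw [← roots_multiset_prod_X_sub_C (slope f y x₀ ::ₘ _), prod_X_sub_C_eq_polar h hf hD hu hy₀, hut,
    ← prod_X_sub_C_eq_polar h hf hD ht hx, roots_multiset_prod_X_sub_C]

lemma card_repeatedSlopes (ht : HasTangentSlope f x₀ D x t) (hx : x ≠ x₀) :
    (repeatedSlopes f x₀ x).card + 1 = #D := by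
  rw [← Multiset.card_cons (slope f x x₀)]
  exact card_eq_card_of_slopes_eq ht.1 (ht.map_slope_eq hx)

lemma eq_slope_of_mem_repeatedSlopes (h : ∀ x ≠ x₀, ∃ t, HasTangentSlope f x₀ D x t)
    (hf : ∑ x, f x = 0) (hD : 2 ≤ #D) (hD' : #D ≤ 3) (hchar : (#D + 1 : F) ≠ 0) (hx : x ≠ x₀)
    (hs : s ∈ repeatedSlopes f x₀ x) : s = slope f x x₀ := by
  by_contra hne
  have hthree := (mem_repeatedSlopes hx).mp hs
  set E := slope f x x₀ ::ₘ repeatedSlopes f x₀ x with hE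
  have hmaps : (chord f x₀ x s).val.map (slope f · x₀) ≤ E.filter (¬ s = ·) := by
    rw [Multiset.le_iff_subset
      (Multiset.Nodup.map_on (slope_injOn_chord hx (Ne.symm hne)) (nodup _))]
    intro r hr
    obtain ⟨y, hy, rfl⟩ := Multiset.mem_map.mp hr
    rw [Multiset.mem_filter, hE, ← slopes_eq_of_mem_chord h hf hD hchar hx hs hy]
    exact ⟨Multiset.mem_cons_self _ _, (slope_ne_of_mem_chord hx (Ne.symm hne) hy).symm⟩
  have hcount : E.count s = #(chord f x₀ x s) - 2 := by
    rw [hE, Multiset.count_cons_of_ne hne, count_repeatedSlopes hx]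
  have hle := Multiset.card_le_card hmaps
  obtain ⟨t, ht⟩ := h x hx
  have hcard := ht.card_repeatedSlopes hx
  have hsplit := congrArg Multiset.card (Multiset.filter_add_not (s = ·) E)
  rw [Multiset.card_add, ← Multiset.count_eq_card_filter_eq, hcount] at hsplit
  rw [Multiset.card_map, card_val] at hle
  rw [hE, Multiset.card_cons, ← hE] at hsplit
  omega

lemma natCast_card_add_one_ne_zero (h : ∀ x ≠ x₀, ∃ t, HasTangentSlope f x₀ D x t)
    (hf : ∑ x, f x = 0) (hD : 2 ≤ #D) : (#D + 1 : F) ≠ 0 := by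
  intro hchar
  have hchord : ∀ x ≠ x₀, slope f x x₀ ∉ D ∧ #(chord f x₀ x (slope f x x₀)) = 1 := by
    intro x hx
    obtain ⟨t, ht⟩ := h x hx
    have hroot := (isRoot_polar h hf hD ht hx).mp (isRoot_polar_self hchar)
    have hmem : t ∉ repeatedSlopes f x₀ x := fun hmem =>
      ht.notMem_of_mem_repeatedSlopes hx hmem (mem_insert_self t D)
    rw [← (Multiset.mem_cons.mp hroot).resolve_right hmem]
    exact ⟨ht.1, (ht.2 t).mpr (mem_insert_self t D)⟩
  have hinj : Set.InjOn (slope f · x₀) ({x₀}ᶜ : Finset F) := by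
    intro x hx y hy hxy
    simp only [coe_compl, coe_singleton, Set.mem_compl_iff, Set.mem_singleton_iff] at hx hy
    exact card_le_one.mp (hchord x hx).2.le x (self_mem_chord hx) y
      (mem_chord_of_slope_eq hx hy hxy.symm)
  have hle := card_le_card_of_injOn (t := Dᶜ) (slope f · x₀)
    (fun x hx => by simpa using (hchord x (by simpa using hx)).1) hinj
  have hDF := card_le_univ D
  rw [card_compl, card_compl, card_singleton] at hle
  omega

theorem card_chord_slope (h : ∀ x ≠ x₀, ∃ t, HasTangentSlope f x₀ D x t)
    (hf : ∑ x, f x = 0) (hD : 2 ≤ #D) (hD' : #D ≤ 3) (hx : x ≠ x₀) :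
    #(chord f x₀ x (slope f x x₀)) = #D + 1 := by
  have hchar := natCast_card_add_one_ne_zero h hf hD
  obtain ⟨t, ht⟩ := h x hx
  have hcard := ht.card_repeatedSlopes hx
  have hcount := Multiset.count_eq_card.mpr fun s hs =>
    (eq_slope_of_mem_repeatedSlopes h hf hD hD' hchar hx hs).symm
  rw [count_repeatedSlopes hx] at hcount
  omega

end HasTangentSlope

end Slopes

section Plane

variable {F : Type*} [Field F]

lemma pgMem_mk {v : Fin 3 → F} (hv : v ≠ 0) {L : PGLine F} :
    pgMem (Projectivization.mk F v hv) L ↔ v ∈ L.val := by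
  rw [pgMem, Projectivization.submodule_mk, Submodule.span_singleton_le_iff_mem]

lemma pgMem_iff_rep_mem {P : PGPoint F} {L : PGLine F} : pgMem P L ↔ P.rep ∈ L.val := by
  rw [← pgMem_mk P.rep_nonzero, P.mk_rep]

/-- The line spanned by two linearly independent vectors. -/
def lineSpan {u v : Fin 3 → F} (h : LinearIndependent F ![u, v]) : PGLine F :=
  ⟨Submodule.span F {u, v}, by
    rw [← Matrix.range_cons_cons_empty]; simpa using finrank_span_eq_card h⟩

lemma left_mem_lineSpan {u v : Fin 3 → F} (h : LinearIndependent F ![u, v]) :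
    u ∈ (lineSpan h).val :=
  Submodule.mem_span_of_mem (by simp)

lemma right_mem_lineSpan {u v : Fin 3 → F} (h : LinearIndependent F ![u, v]) :
    v ∈ (lineSpan h).val :=
  Submodule.mem_span_of_mem (by simp)

lemma eq_lineSpan {u v : Fin 3 → F} (h : LinearIndependent F ![u, v]) {L : PGLine F}
    (hu : u ∈ L.val) (hv : v ∈ L.val) : L = lineSpan h := by
  have hle : (lineSpan h).val ≤ L.val := by
    rw [lineSpan, Submodule.span_le, Set.pair_subset_iff]
    exact ⟨hu, hv⟩
  exact Subtype.ext
    (Submodule.eq_of_le_of_finrank_eq hle ((lineSpan h).2.trans L.2.symm)).symm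

lemma pgLine_eq_of_mem {u v : Fin 3 → F} (h : LinearIndependent F ![u, v]) {L M : PGLine F}
    (huL : u ∈ L.val) (hvL : v ∈ L.val) (huM : u ∈ M.val) (hvM : v ∈ M.val) : L = M :=
  (eq_lineSpan h huL hvL).trans (eq_lineSpan h huM hvM).symm

/-- The line joining two distinct points. -/
noncomputable def pgJoin {P Q : PGPoint F} (h : P ≠ Q) : PGLine F :=
  lineSpan (Projectivization.linearIndependent_pair_iff_ne.mpr h)

lemma pgMem_pgJoin {P Q : PGPoint F} (h : P ≠ Q) :
    pgMem P (pgJoin h) ∧ pgMem Q (pgJoin h) :=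
  ⟨pgMem_iff_rep_mem.mpr (left_mem_lineSpan _), pgMem_iff_rep_mem.mpr (right_mem_lineSpan _)⟩

lemma eq_pgJoin {P Q : PGPoint F} (h : P ≠ Q) {L : PGLine F} (hP : pgMem P L) (hQ : pgMem Q L) :
    L = pgJoin h :=
  eq_lineSpan _ (pgMem_iff_rep_mem.mp hP) (pgMem_iff_rep_mem.mp hQ)

lemma pgLine_eq_of_pgMem {P Q : PGPoint F} (h : P ≠ Q) {L M : PGLine F} (hPL : pgMem P L)
    (hQL : pgMem Q L) (hPM : pgMem P M) (hQM : pgMem Q M) : L = M :=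
  (eq_pgJoin h hPL hQL).trans (eq_pgJoin h hPM hQM).symm

/-- The line with equation `φ = 0`. -/
def lineOfDual (φ : Module.Dual F (Fin 3 → F)) (hφ : φ ≠ 0) : PGLine F :=
  ⟨LinearMap.ker φ, by
    have h := φ.finrank_range_add_finrank_ker
    rw [LinearMap.range_eq_top.mpr (LinearMap.surjective hφ), finrank_top, Module.finrank_self,
      Module.finrank_fin_fun] at h
    omega⟩

lemma exists_eq_lineOfDual (L : PGLine F) : ∃ φ hφ, L = lineOfDual φ hφ := by
  have hlt : L.val < ⊤ := Submodule.lt_top_of_finrank_lt_finrank (by simp [L.2])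
  obtain ⟨φ, hφ, hle⟩ := Submodule.exists_le_ker_of_lt_top L.val hlt
  exact ⟨φ, hφ, Subtype.ext
    (Submodule.eq_of_le_of_finrank_eq hle (L.2.trans (lineOfDual φ hφ).2.symm))⟩

lemma mem_lineOfDual {φ : Module.Dual F (Fin 3 → F)} {hφ : φ ≠ 0} {v : Fin 3 → F} :
    v ∈ (lineOfDual φ hφ).val ↔ φ v = 0 :=
  LinearMap.mem_ker

lemma exists_mem_inf_pgLine (L M : PGLine F) : ∃ P, pgMem P L ∧ pgMem P M := by
  have hsup := Submodule.finrank_sup_add_finrank_inf_eq L.val M.val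
  have hle := Submodule.finrank_le (L.val ⊔ M.val)
  rw [Module.finrank_fin_fun] at hle
  rw [L.2, M.2] at hsup
  obtain ⟨v, hv, hv₀⟩ := Submodule.exists_mem_ne_zero_of_ne_bot
    (p := L.val ⊓ M.val) fun h => by rw [h, finrank_bot] at hsup; omega
  exact ⟨.mk F v hv₀, (pgMem_mk hv₀).mpr hv.1, (pgMem_mk hv₀).mpr hv.2⟩

lemma exists_not_pgMem (L : PGLine F) : ∃ P : PGPoint F, ¬ pgMem P L := by
  obtain ⟨φ, hφ, rfl⟩ := exists_eq_lineOfDual L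
  obtain ⟨v, hv⟩ := DFunLike.ne_iff.mp hφ
  have hv₀ : v ≠ 0 := by
    rintro rfl
    exact hv φ.map_zero
  exact ⟨.mk F v hv₀, fun h => hv (mem_lineOfDual.mp ((pgMem_mk hv₀).mp h))⟩

lemma exists_line_not_pgMem (P : PGPoint F) : ∃ L : PGLine F, ¬ pgMem P L := by
  obtain ⟨i, hi⟩ := Function.ne_iff.mp P.rep_nonzero
  have hproj : (LinearMap.proj i : Module.Dual F (Fin 3 → F)) ≠ 0 := fun h =>
    hi (LinearMap.congr_fun h P.rep)
  exact ⟨lineOfDual _ hproj, fun h => hi (mem_lineOfDual.mp (pgMem_iff_rep_mem.mp h))⟩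

/-- The lines `L i` have no common point exactly when their equations are linearly independent;
these are then the coordinate functions of a basis. -/
lemma exists_basis_of_not_concurrent {L : Fin 3 → PGLine F} (hL : ¬ ∃ P, ∀ i, pgMem P (L i)) :
    ∃ e : Module.Basis (Fin 3) F (Fin 3 → F), ∀ i v, v ∈ (L i).val ↔ e.coord i v = 0 := by
  choose φ hφ hLφ using fun i => exists_eq_lineOfDual (L i)
  have hinj : Function.Injective (LinearMap.pi φ) := by
    rw [← LinearMap.ker_eq_bot, LinearMap.ker_eq_bot']
    intro v hv
    by_contra hv₀
    exact hL ⟨.mk F v hv₀, fun i => (pgMem_mk hv₀).mpr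
      (hLφ i ▸ mem_lineOfDual.mpr (congrFun hv i))⟩
  refine ⟨.ofEquivFun (LinearEquiv.ofInjectiveEndo _ hinj), fun i v => ?_⟩
  rw [hLφ i, mem_lineOfDual]
  rfl

/-- The vectors spanning the points of `S`. -/
def cone (S : Set (PGPoint F)) : Set (Fin 3 → F) :=
  {v | ∃ hv : v ≠ 0, Projectivization.mk F v hv ∈ S}

lemma mk_mem_iff {S : Set (PGPoint F)} {v : Fin 3 → F} (hv : v ≠ 0) :
    Projectivization.mk F v hv ∈ S ↔ v ∈ cone S :=
  ⟨fun h => ⟨hv, h⟩, fun ⟨_, h⟩ => h⟩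

lemma mem_iff_rep_mem_cone {S : Set (PGPoint F)} {P : PGPoint F} : P ∈ S ↔ P.rep ∈ cone S := by
  rw [← mk_mem_iff P.rep_nonzero, P.mk_rep]

lemma smul_mem_cone {S : Set (PGPoint F)} {v : Fin 3 → F} {c : F} (hc : c ≠ 0) :
    c • v ∈ cone S ↔ v ∈ cone S := by
  rcases eq_or_ne v 0 with rfl | hv
  · rw [smul_zero]
  · have hcv := smul_ne_zero hc hv
    rw [← mk_mem_iff hv, ← mk_mem_iff hcv,
      (Projectivization.mk_eq_mk_iff' F _ _ hcv hv).mpr ⟨c, rfl⟩]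

/-- The points of the line spanned by `u` and `v`: the point `⟨u + a v⟩` is indexed by `some a`,
and the point `⟨v⟩` by `none`. -/
def linePoint {u v : Fin 3 → F} (h : LinearIndependent F ![u, v]) : Option F → PGPoint F
  | some a => .mk F (u + a • v) fun h₀ => one_ne_zero
      (LinearIndependent.pair_iff.mp h 1 a (by rwa [one_smul])).1
  | none => .mk F v (by simpa using h.ne_zero 1)

lemma linePoint_injective {u v : Fin 3 → F} (h : LinearIndependent F ![u, v]) :
    Function.Injective (linePoint h) := by
  rintro (_ | a) (_ | b) hab
  · rfl
  all_goals
    obtain ⟨c, hc⟩ := (Projectivization.mk_eq_mk_iff' F _ _ _ _).mp hab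
    rw [← one_smul F u] at hc
  · have hcoord := h.eq_of_pair (s := c) (t := c * b) (s' := 0) (t' := 1) (by
      simpa only [smul_add, smul_smul, mul_one, zero_smul, zero_add, one_smul] using hc)
    simp [hcoord.1] at hcoord
  · have hcoord := h.eq_of_pair (s := 0) (t := c) (s' := 1) (t' := a) (by
      rwa [zero_smul, zero_add])
    simp at hcoord
  · have hcoord := h.eq_of_pair (s := c) (t := c * b) (s' := 1) (t' := a) (by
      simpa only [smul_add, smul_smul, mul_one] using hc)
    rw [hcoord.1, one_mul] at hcoord
    rw [hcoord.2]

lemma range_linePoint {u v : Fin 3 → F} (h : LinearIndependent F ![u, v]) :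
    Set.range (linePoint h) = {P | pgMem P (lineSpan h)} := by
  ext P
  constructor
  · rintro ⟨_ | a, rfl⟩
    · exact (pgMem_mk _).mpr (right_mem_lineSpan h)
    · exact (pgMem_mk _).mpr (add_mem (left_mem_lineSpan h)
        (Submodule.smul_mem _ a (right_mem_lineSpan h)))
  · intro hP
    obtain ⟨b, c, hbc⟩ := Submodule.mem_span_pair.mp (pgMem_iff_rep_mem.mp hP)
    rw [← P.mk_rep]
    rcases eq_or_ne b 0 with rfl | hb
    · refine ⟨none, ((Projectivization.mk_eq_mk_iff' F _ _ _ _).mpr ⟨c, ?_⟩).symm⟩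
      rwa [zero_smul, zero_add] at hbc
    · refine ⟨some (c / b), ((Projectivization.mk_eq_mk_iff' F _ _ _ _).mpr ⟨b, ?_⟩).symm⟩
      rw [smul_add, smul_smul, mul_div_cancel₀ _ hb, hbc]

lemma exists_linearIndependent_mem (L : PGLine F) :
    ∃ u v, LinearIndependent F ![u, v] ∧ u ∈ L.val ∧ v ∈ L.val := by
  have b := Module.finBasisOfFinrankEq F L.val L.2
  have hli := b.linearIndependent.map' L.val.subtype L.val.ker_subtype
  have hpair : ![(b 0 : Fin 3 → F), b 1] = L.val.subtype ∘ b := by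
    ext i : 1
    fin_cases i <;> rfl
  exact ⟨b 0, b 1, hpair ▸ hli, (b 0).2, (b 1).2⟩

variable [Fintype F]

open scoped Classical in
lemma nsec_eq_card_add_ite {S : Set (PGPoint F)} {u v : Fin 3 → F} {L : PGLine F}
    (h : LinearIndependent F ![u, v]) (hu : u ∈ L.val) (hv : v ∈ L.val) :
    nsec S L = #{a : F | u + a • v ∈ cone S} + if v ∈ cone S then 1 else 0 := by
  have himage : {P ∈ S | pgMem P L} = linePoint h '' (linePoint h ⁻¹' S) := by
    rw [eq_lineSpan h hu hv, Set.image_preimage_eq_inter_range, range_linePoint]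
    rfl
  have hpreimage : (linePoint h ⁻¹' S).toFinset =
      ({o | linePoint h o ∈ S} : Finset (Option F)) := by
    ext
    simp
  rw [nsec, himage, Set.ncard_image_of_injective _ (linePoint_injective h),
    Set.ncard_eq_toFinset_card', hpreimage, card_filter, Fintype.sum_option, ← card_filter,
    add_comm]
  simp only [linePoint, mk_mem_iff]

lemma ncard_pgMem_line (L : PGLine F) : {P | pgMem P L}.ncard = Fintype.card F + 1 := by
  obtain ⟨u, v, h, hu, hv⟩ := exists_linearIndependent_mem L
  rw [eq_lineSpan h hu hv, ← range_linePoint, ← Set.image_univ,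
    Set.ncard_image_of_injective _ (linePoint_injective h), Set.ncard_univ,
    Nat.card_eq_fintype_card, Fintype.card_option]

lemma ncard_pgMem_point (P : PGPoint F) : {L | pgMem P L}.ncard = Fintype.card F + 1 := by
  obtain ⟨M, hM⟩ := exists_line_not_pgMem P
  rw [← ncard_pgMem_line M, eq_comm]
  have hne : ∀ Q, pgMem Q M → P ≠ Q := by
    rintro _ hQ rfl
    exact hM hQ
  refine Set.ncard_congr (fun Q hQ => pgJoin (hne Q hQ)) (fun Q hQ => (pgMem_pgJoin _).1) ?_ ?_
  · intro Q R hQ hR hQR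
    by_contra hQR_ne
    have hL := pgMem_pgJoin (hne Q hQ)
    have hRL : pgMem R (pgJoin (hne Q hQ)) := hQR ▸ (pgMem_pgJoin (hne R hR)).2
    exact hM (pgLine_eq_of_pgMem hQR_ne hL.2 hRL hQ hR ▸ hL.1)
  · intro L hPL
    obtain ⟨Q, hQL, hQM⟩ := exists_mem_inf_pgLine L M
    exact ⟨Q, hQM, (eq_pgJoin _ hPL hQL).symm⟩

end Plane

section Counting

variable {F : Type*} [Field F] {S : Set (PGPoint F)} {P : PGPoint F} {L : PGLine F}

section Finite

variable [Finite F]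

lemma nsec_pos_iff : 0 < nsec S L ↔ ∃ P ∈ S, pgMem P L :=
  Set.ncard_pos (Set.toFinite _)

/-- The pencil of lines through `P`, as a finset to sum over. -/
noncomputable def pencil (P : PGPoint F) : Finset (PGLine F) :=
  (Set.toFinite {L | pgMem P L}).toFinset

lemma mem_pencil : L ∈ pencil P ↔ pgMem P L :=
  Set.Finite.mem_toFinset _

open scoped Classical in
lemma nsec_eq_card_filter (S : Set (PGPoint F)) (L : PGLine F) :
    nsec S L = #{P ∈ (Set.toFinite S).toFinset | pgMem P L} := by
  rw [nsec, Set.ncard_eq_toFinset_card _ (Set.toFinite _)]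
  congr 1
  ext
  simp

lemma sum_nsec_sub_one (hP : P ∈ S) : ∑ L ∈ pencil P, (nsec S L - 1) = S.ncard - 1 := by
  classical
  have hPS : P ∈ (Set.toFinite S).toFinset := (Set.Finite.mem_toFinset _).mpr hP
  have hline : ∀ L ∈ pencil P,
      nsec S L - 1 = #(((Set.toFinite S).toFinset.erase P).bipartiteBelow pgMem L) := by
    intro L hL
    rw [bipartiteBelow, filter_erase,
      card_erase_of_mem (mem_filter.mpr ⟨hPS, mem_pencil.mp hL⟩), nsec_eq_card_filter]
  have hpoint : ∀ Q ∈ (Set.toFinite S).toFinset.erase P,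
      #((pencil P).bipartiteAbove pgMem Q) = 1 := by
    intro Q hQ
    have hPQ := (ne_of_mem_erase hQ).symm
    refine card_eq_one.mpr ⟨pgJoin hPQ, eq_singleton_iff_unique_mem.mpr ⟨?_, fun L hL => ?_⟩⟩
    · exact mem_filter.mpr ⟨mem_pencil.mpr (pgMem_pgJoin hPQ).1, (pgMem_pgJoin hPQ).2⟩
    · exact eq_pgJoin hPQ (mem_pencil.mp (mem_filter.mp hL).1) (mem_filter.mp hL).2
  rw [sum_congr rfl hline, ← sum_card_bipartiteAbove_eq_sum_card_bipartiteBelow,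
    sum_congr rfl hpoint, ← card_eq_sum_ones, card_erase_of_mem hPS,
    Set.ncard_eq_toFinset_card S (Set.toFinite _)]

lemma mul_ncard_secants_eq {k m : ℕ}
    (h : ∀ P ∈ S, {L | pgMem P L ∧ nsec S L = k}.ncard = m) :
    k * {L | nsec S L = k}.ncard = m * S.ncard := by
  classical
  have hpoint : ∀ P ∈ (Set.toFinite S).toFinset,
      #((Set.toFinite {L | nsec S L = k}).toFinset.bipartiteAbove pgMem P) = m := by
    intro P hP
    rw [← h P ((Set.Finite.mem_toFinset _).mp hP),
      Set.ncard_eq_toFinset_card _ (Set.toFinite _), bipartiteAbove]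
    congr 1
    ext
    simp [and_comm]
  have hline : ∀ L ∈ (Set.toFinite {L | nsec S L = k}).toFinset,
      #((Set.toFinite S).toFinset.bipartiteBelow pgMem L) = k := by
    intro L hL
    rw [bipartiteBelow, ← nsec_eq_card_filter]
    exact (Set.Finite.mem_toFinset (Set.toFinite {L | nsec S L = k})).mp hL
  have hcount := sum_card_bipartiteAbove_eq_sum_card_bipartiteBelow
    (s := (Set.toFinite S).toFinset) (t := (Set.toFinite {L | nsec S L = k}).toFinset) pgMem
  rw [sum_const_nat hpoint, sum_const_nat hline] at hcount
  rw [Set.ncard_eq_toFinset_card _ (Set.toFinite {L | nsec S L = k}),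
    Set.ncard_eq_toFinset_card S (Set.toFinite _), mul_comm k, ← hcount, mul_comm]

end Finite

variable [Fintype F]

lemma card_pencil (P : PGPoint F) : #(pencil P) = Fintype.card F + 1 := by
  rw [← ncard_pgMem_point P, Set.ncard_eq_toFinset_card _ (Set.toFinite _), pencil]

namespace isSemioval

variable {n : ℕ}

lemma sum_nsec_sub_two (hS : isSemioval S) (hsize : S.ncard = Fintype.card F + n) (hP : P ∈ S) :
    ∑ L ∈ pencil P, (nsec S L - 2) + 1 = n := by
  classical
  obtain ⟨t, ⟨htP, ht⟩, huniq⟩ := hS P hP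
  have htangent : ∀ L ∈ pencil P,
      nsec S L - 1 = (nsec S L - 2) + if L = t then 0 else 1 := by
    intro L hL
    split_ifs with h
    · rw [h, ht]
    · have hpos : 0 < nsec S L := nsec_pos_iff.mpr ⟨P, hP, mem_pencil.mp hL⟩
      have hne : nsec S L ≠ 1 := fun h₁ => h (huniq L ⟨mem_pencil.mp hL, h₁⟩)
      omega
  have hsum := sum_nsec_sub_one hP
  rw [sum_congr rfl htangent, sum_add_distrib, sum_ite, sum_const_zero, zero_add,
    ← card_eq_sum_ones, filter_ne', card_erase_of_mem (mem_pencil.mpr htP), card_pencil,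
    hsize] at hsum
  have hF := Fintype.card_pos (α := F)
  omega

lemma nsec_le (hS : isSemioval S) (hsize : S.ncard = Fintype.card F + n) (L : PGLine F) :
    nsec S L ≤ n + 1 := by
  by_contra! h
  obtain ⟨P, hP, hPL⟩ := nsec_pos_iff.mp (Nat.zero_lt_of_lt h)
  have hle := single_le_sum (f := fun L => nsec S L - 2) (fun _ _ => Nat.zero_le _)
    (mem_pencil.mpr hPL)
  have hsum := hS.sum_nsec_sub_two hsize hP
  omega

lemma nsec_le_two (hS : isSemioval S) (hsize : S.ncard = Fintype.card F + n)
    (hL : nsec S L = n + 1) (hP : P ∈ S) (hPL : pgMem P L) {M : PGLine F} (hPM : pgMem P M)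
    (hM : M ≠ L) : nsec S M ≤ 2 := by
  classical
  have hle := sum_le_sum_of_subset (f := fun L => nsec S L - 2)
    (insert_subset (mem_pencil.mpr hPM) (singleton_subset_iff.mpr (mem_pencil.mpr hPL)))
  rw [sum_pair hM, hS.sum_nsec_sub_two hsize hP |> Nat.eq_sub_of_add_eq] at hle
  omega

lemma three_mul_ncard_trisecants (hS : isSemioval S) (hsize : S.ncard = Fintype.card F + n)
    (hle : ∀ L, nsec S L ≤ 3) :
    3 * {L | nsec S L = 3}.ncard = (n - 1) * (Fintype.card F + n) := by
  rw [← hsize]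
  refine mul_ncard_secants_eq fun P hP => ?_
  classical
  have hexcess : ∀ L ∈ pencil P, nsec S L - 2 = if nsec S L = 3 then 1 else 0 := by
    intro L _
    have := hle L
    split_ifs <;> omega
  rw [← hS.sum_nsec_sub_two hsize hP, Nat.add_sub_cancel, sum_congr rfl hexcess, sum_boole,
    Nat.cast_id, Set.ncard_eq_toFinset_card _ (Set.toFinite _)]
  congr 1
  ext
  simp [mem_pencil]

end isSemioval

end Counting

section AffineCoordinates

variable {F : Type*} [Field F]

/-- The point `(x, y)` of the affine plane in the coordinates of `PG(2,F)` given by `e`, where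
`e.coord 0 = 0` is the line at infinity. -/
noncomputable def affineVec (e : Module.Basis (Fin 3) F (Fin 3 → F)) (x y : F) : Fin 3 → F :=
  e 0 + x • e 1 + y • e 2

/-- The line `y = s * x + c` in affine coordinates. -/
noncomputable def affineLine (e : Module.Basis (Fin 3) F (Fin 3 → F)) (s c : F) : PGLine F :=
  lineOfDual (e.coord 2 - s • e.coord 1 - c • e.coord 0) fun h => by
    simpa using LinearMap.congr_fun h (e 2)

/-- The line `x = a` in affine coordinates. -/
noncomputable def verticalLine (e : Module.Basis (Fin 3) F (Fin 3 → F)) (a : F) : PGLine F :=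
  lineOfDual (e.coord 1 - a • e.coord 0) fun h => by
    simpa using LinearMap.congr_fun h (e 1)

lemma exists_basis_of_pgMem {P : PGPoint F} {L : PGLine F} (hPL : pgMem P L) :
    ∃ e : Module.Basis (Fin 3) F (Fin 3 → F),
      (∀ v, v ∈ L.val ↔ e.coord 0 v = 0) ∧ P = .mk F (e 2) (e.ne_zero 2) := by
  obtain ⟨Q, hQ⟩ := exists_not_pgMem L
  have hPQ : P ≠ Q := by
    rintro rfl
    exact hQ hPL
  obtain ⟨M, hM⟩ := exists_line_not_pgMem P
  have hne : pgJoin hPQ ≠ L := fun h => hQ (h ▸ (pgMem_pgJoin hPQ).2)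
  have hconc : ¬ ∃ R, ∀ i, pgMem R (![L, pgJoin hPQ, M] i) := by
    rintro ⟨R, hR⟩
    have hRP : R ≠ P := by
      rintro rfl
      exact hM (hR 2)
    exact hne (pgLine_eq_of_pgMem hRP (hR 1) (pgMem_pgJoin hPQ).1 (hR 0) hPL)
  obtain ⟨e, he⟩ := exists_basis_of_not_concurrent hconc
  refine ⟨e, he 0, ?_⟩
  have h₀ : e.coord 0 P.rep = 0 := (he 0 _).mp (pgMem_iff_rep_mem.mp hPL)
  have h₁ : e.coord 1 P.rep = 0 := (he 1 _).mp (pgMem_iff_rep_mem.mp (pgMem_pgJoin hPQ).1)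
  have hrep := e.sum_repr P.rep
  rw [Fin.sum_univ_three, ← e.coord_apply, ← e.coord_apply, h₀, h₁, zero_smul, zero_smul,
    zero_add, zero_add] at hrep
  rw [← P.mk_rep]
  exact (Projectivization.mk_eq_mk_iff' F _ _ _ _).mpr ⟨_, hrep⟩

variable {e : Module.Basis (Fin 3) F (Fin 3 → F)} {s c x y : F}

lemma coord_zero_affineVec : e.coord 0 (affineVec e x y) = 1 := by
  simp [affineVec]

lemma affineVec_ne_zero : affineVec e x y ≠ 0 := fun h => by
  simpa [h] using coord_zero_affineVec (e := e) (x := x) (y := y)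

lemma affineVec_notMem {L : PGLine F} (hL : ∀ v, v ∈ L.val ↔ e.coord 0 v = 0) :
    affineVec e x y ∉ L.val := by
  rw [hL, coord_zero_affineVec]
  exact one_ne_zero

lemma affineVec_mem_affineLine : affineVec e x y ∈ (affineLine e s c).val ↔ y = s * x + c := by
  rw [affineLine, mem_lineOfDual, ← sub_eq_zero (a := y)]
  simp [affineVec, sub_sub]

lemma direction_mem_affineLine {t : F} :
    e 1 + s • e 2 ∈ (affineLine e t c).val ↔ s = t := by
  rw [affineLine, mem_lineOfDual, ← sub_eq_zero (a := s)]
  simp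

lemma affineVec_mem_verticalLine {a : F} :
    affineVec e x y ∈ (verticalLine e a).val ↔ x = a := by
  rw [verticalLine, mem_lineOfDual, ← sub_eq_zero (a := x)]
  simp [affineVec]

lemma vertical_mem_verticalLine {a : F} : e 2 ∈ (verticalLine e a).val := by
  rw [verticalLine, mem_lineOfDual]
  simp

lemma linearIndependent_affineVec_direction (e : Module.Basis (Fin 3) F (Fin 3 → F)) (s c : F) :
    LinearIndependent F ![affineVec e 0 c, e 1 + s • e 2] :=
  LinearIndependent.pair_iff.mpr fun a b hab =>
    ⟨by simpa [affineVec] using congrArg (e.coord 0) hab,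
      by simpa [affineVec] using congrArg (e.coord 1) hab⟩

lemma linearIndependent_affineVec_vertical (e : Module.Basis (Fin 3) F (Fin 3 → F)) (x : F) :
    LinearIndependent F ![affineVec e x 0, e 2] :=
  LinearIndependent.pair_iff.mpr fun a b hab =>
    ⟨by simpa [affineVec] using congrArg (e.coord 0) hab,
      by simpa [affineVec] using congrArg (e.coord 2) hab⟩

lemma linearIndependent_directions (e : Module.Basis (Fin 3) F (Fin 3 → F)) :
    LinearIndependent F ![e 1, e 2] :=
  LinearIndependent.pair_iff.mpr fun a b hab =>
    ⟨by simpa using congrArg (e.coord 1) hab, by simpa using congrArg (e.coord 2) hab⟩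

lemma exists_eq_affineLine {M : PGLine F} (hM : e 2 ∉ M.val) : ∃ s c, M = affineLine e s c := by
  obtain ⟨φ, hφ, rfl⟩ := exists_eq_lineOfDual M
  have h₂ : φ (e 2) ≠ 0 := hM
  refine ⟨-φ (e 1) / φ (e 2), -φ (e 0) / φ (e 2), pgLine_eq_of_mem
    (linearIndependent_affineVec_direction e _ (-φ (e 0) / φ (e 2))) ?_ ?_
    (affineVec_mem_affineLine.mpr (by simp)) (direction_mem_affineLine.mpr rfl)⟩ <;>
  · rw [mem_lineOfDual]
    simp [affineVec, h₂]

lemma exists_eq_verticalLine {L M : PGLine F} (hL : ∀ v, v ∈ L.val ↔ e.coord 0 v = 0)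
    (hM : e 2 ∈ M.val) (hML : M ≠ L) : ∃ a, M = verticalLine e a := by
  obtain ⟨φ, hφ, rfl⟩ := exists_eq_lineOfDual M
  have h₁ : φ (e 1) ≠ 0 := fun h₁ => hML <| pgLine_eq_of_mem (linearIndependent_directions e)
    (mem_lineOfDual.mpr h₁) hM ((hL _).mpr (by simp)) ((hL _).mpr (by simp))
  refine ⟨-φ (e 0) / φ (e 1), pgLine_eq_of_mem (linearIndependent_affineVec_vertical e _) ?_ hM
    (affineVec_mem_verticalLine.mpr rfl) vertical_mem_verticalLine⟩
  rw [mem_lineOfDual]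
  simp [affineVec, h₁]

lemma exists_eq_affineVec {v : Fin 3 → F} (hv : e.coord 0 v ≠ 0) :
    ∃ x y, v = e.coord 0 v • affineVec e x y := by
  refine ⟨e.coord 1 v / e.coord 0 v, e.coord 2 v / e.coord 0 v, ?_⟩
  conv_lhs => rw [← e.sum_repr v, Fin.sum_univ_three]
  simp only [affineVec, smul_add, smul_smul, mul_div_cancel₀ _ hv]
  rfl

variable [Fintype F] {S : Set (PGPoint F)}

open scoped Classical in
lemma nsec_affineLine : nsec S (affineLine e s c) =
    #{x | affineVec e x (s * x + c) ∈ cone S} + if e 1 + s • e 2 ∈ cone S then 1 else 0 := by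
  rw [nsec_eq_card_add_ite (linearIndependent_affineVec_direction e s c)
    (affineVec_mem_affineLine.mpr (by simp)) (direction_mem_affineLine.mpr rfl)]
  congr! 4 with x
  rw [affineVec, affineVec]
  module

open scoped Classical in
lemma nsec_verticalLine : nsec S (verticalLine e x) =
    #{y | affineVec e x y ∈ cone S} + if e 2 ∈ cone S then 1 else 0 := by
  rw [nsec_eq_card_add_ite (linearIndependent_affineVec_vertical e x)
    (affineVec_mem_verticalLine.mpr rfl) vertical_mem_verticalLine]
  congr! 4 with y
  rw [affineVec, affineVec]
  module

end AffineCoordinates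

section Centre

variable {F : Type*} [Field F] {S : Set (PGPoint F)} {e : Module.Basis (Fin 3) F (Fin 3 → F)}
  {f : F → F} {x₀ : F}

/-- The affine points of `S`, in the coordinates given by `e`, are the points of the graph of `f`
other than `(x₀, f x₀)`. -/
def IsAffineGraph (e : Module.Basis (Fin 3) F (Fin 3 → F)) (S : Set (PGPoint F)) (x₀ : F)
    (f : F → F) : Prop :=
  ∀ x y, affineVec e x y ∈ cone S ↔ x ≠ x₀ ∧ y = f x

variable [Fintype F] {L : PGLine F} {n : ℕ}

/-- The tangent at the point at infinity of the vertical lines is the line `x = x₀`, and the value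
of `f` there may be chosen freely. -/
lemma isSemioval.exists_isAffineGraph (hS : isSemioval S) (hsize : S.ncard = Fintype.card F + n)
    (hn : 0 < n) (hL : nsec S L = n + 1) (he : ∀ v, v ∈ L.val ↔ e.coord 0 v = 0)
    (h₂ : e 2 ∈ cone S) : ∃ x₀ f, IsAffineGraph e S x₀ f ∧ ∑ x, f x = 0 := by
  classical
  have hP := (mk_mem_iff (e.ne_zero 2)).mpr h₂
  have hPvert (x : F) := (pgMem_mk (e.ne_zero 2)).mpr (vertical_mem_verticalLine (e := e) (a := x))
  have hPL : pgMem (.mk F (e 2) (e.ne_zero 2)) L := (pgMem_mk _).mpr ((he _).mpr (by simp))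
  have hvert (x : F) : nsec S (verticalLine e x) = #{y | affineVec e x y ∈ cone S} + 1 := by
    rw [nsec_verticalLine, if_pos h₂]
  have hle (x : F) : #{y | affineVec e x y ∈ cone S} ≤ 1 := by
    have hne : verticalLine e x ≠ L := fun h =>
      affineVec_notMem he (h ▸ affineVec_mem_verticalLine (y := 0).mpr rfl)
    have hle₂ := hS.nsec_le_two hsize hL hP hPL (hPvert x) hne
    rw [hvert] at hle₂
    omega
  obtain ⟨t, ⟨hPt, ht⟩, huniq⟩ := hS _ hP
  obtain ⟨x₀, rfl⟩ := exists_eq_verticalLine he ((pgMem_mk (e.ne_zero 2)).mp hPt) (by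
    rintro rfl
    omega)
  have hcard (x : F) : #{y | affineVec e x y ∈ cone S} = 0 ↔ x = x₀ := by
    constructor
    · intro h
      rw [← affineVec_mem_verticalLine (e := e) (y := 0),
        ← huniq _ ⟨hPvert x, by rw [hvert, h]⟩, affineVec_mem_verticalLine]
    · rintro rfl
      have := hvert x
      omega
  have hsingle (x : F) (hx : x ≠ x₀) : ∃ y, ({y | affineVec e x y ∈ cone S} : Finset F) = {y} :=
    card_eq_one.mp (le_antisymm (hle x) (Nat.one_le_iff_ne_zero.mpr (mt (hcard x).mp hx)))
  choose! g hg using hsingle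
  refine ⟨x₀, Function.update g x₀ (-∑ x ∈ univ \ {x₀}, g x), fun x y => ?_, ?_⟩
  · rcases eq_or_ne x x₀ with rfl | hx
    · simpa using filter_eq_empty_iff.mp (card_eq_zero.mp ((hcard x).mpr rfl)) (mem_univ y)
    · simpa [hx] using Finset.ext_iff.mp (hg x hx) y
  · rw [sum_update_of_mem (mem_univ x₀), neg_add_cancel]

section Chord

variable [DecidableEq F] {D : Finset F} {s x : F}

lemma IsAffineGraph.nsec_affineLine (h : IsAffineGraph e S x₀ f)
    (hD : ∀ s, s ∈ D ↔ e 1 + s • e 2 ∈ cone S) :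
    nsec S (affineLine e s (f x - s * x)) = #(chord f x₀ x s) + if s ∈ D then 1 else 0 := by
  classical
  rw [_root_.nsec_affineLine]
  simp only [hD]
  congr 2
  ext y
  rw [mem_filter, h, mem_chord, ← eq_sub_iff_add_eq', eq_comm (b := f y - s * y)]
  simp

lemma isSemioval.card_chord_eq_one (hS : isSemioval S)
    (hsize : S.ncard = Fintype.card F + n) (hL : nsec S L = n + 1)
    (he : ∀ v, v ∈ L.val ↔ e.coord 0 v = 0) (h : IsAffineGraph e S x₀ f)
    (hD : ∀ s, s ∈ D ↔ e 1 + s • e 2 ∈ cone S) (hx : x ≠ x₀) (hs : s ∈ D) :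
    #(chord f x₀ x s) = 1 := by
  obtain ⟨hdir, hQ⟩ := (hD s).mp hs
  have hne : affineLine e s (f x - s * x) ≠ L := fun hline =>
    affineVec_notMem he (hline ▸ affineVec_mem_affineLine (x := 0).mpr rfl)
  have hle := hS.nsec_le_two hsize hL hQ ((pgMem_mk hdir).mpr ((he _).mpr (by simp)))
    ((pgMem_mk hdir).mpr (direction_mem_affineLine.mpr rfl)) hne
  rw [h.nsec_affineLine hD, if_pos hs] at hle
  have hpos := card_pos.mpr ⟨x, self_mem_chord (f := f) (s := s) hx⟩
  omega

lemma isSemioval.exists_hasTangentSlope (hS : isSemioval S)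
    (hsize : S.ncard = Fintype.card F + n) (hL : nsec S L = n + 1)
    (he : ∀ v, v ∈ L.val ↔ e.coord 0 v = 0) (h₂ : e 2 ∈ cone S) (h : IsAffineGraph e S x₀ f)
    (hD : ∀ s, s ∈ D ↔ e 1 + s • e 2 ∈ cone S) (hx : x ≠ x₀) :
    ∃ t, HasTangentSlope f x₀ D x t := by
  have hR := (mk_mem_iff affineVec_ne_zero).mpr ((h x (f x)).mpr ⟨hx, rfl⟩)
  obtain ⟨T, ⟨hRT, hT⟩, huniq⟩ := hS _ hR
  have hPT : e 2 ∉ T.val := fun hPT => by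
    have hPR := (Set.ncard_le_one (Set.toFinite _)).mp hT.le _ ⟨hR, hRT⟩ _
      ⟨(mk_mem_iff (e.ne_zero 2)).mpr h₂, (pgMem_mk _).mpr hPT⟩
    obtain ⟨c, hc⟩ := (Projectivization.mk_eq_mk_iff' F _ _ _ _).mp hPR
    simpa [affineVec] using congrArg (e.coord 0) hc
  obtain ⟨t, c, rfl⟩ := exists_eq_affineLine hPT
  obtain rfl : c = f x - t * x := eq_sub_of_add_eq' <|
    (affineVec_mem_affineLine.mp ((pgMem_mk _).mp hRT)).symm
  rw [h.nsec_affineLine hD] at hT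
  have hpos := card_pos.mpr ⟨x, self_mem_chord (f := f) (s := t) hx⟩
  refine ⟨t, fun ht => ?_, fun s => ⟨fun hs => ?_, fun hs => ?_⟩⟩
  · rw [if_pos ht] at hT
    omega
  · refine mem_insert.mpr (or_iff_not_imp_right.mpr fun hsD => ?_)
    have hline := huniq (affineLine e s (f x - s * x))
      ⟨(pgMem_mk _).mpr (affineVec_mem_affineLine.mpr (by ring)),
        by rw [h.nsec_affineLine hD, hs, if_neg hsD]⟩
    exact direction_mem_affineLine.mp (hline ▸ direction_mem_affineLine.mpr rfl)
  · rcases mem_insert.mp hs with rfl | hsD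
    · omega
    · exact hS.card_chord_eq_one hsize hL he h hD hx hsD

end Chord

theorem isSemioval.exists_centre (hS : isSemioval S) (hsize : S.ncard = Fintype.card F + n)
    (hn : 2 ≤ n) (hn' : n ≤ 3) (hL : nsec S L = n + 1) :
    ∃ Q, ¬ pgMem Q L ∧
      ∀ R ∈ S, ¬ pgMem R L → ∃ M, pgMem R M ∧ pgMem Q M ∧ nsec S M = n + 1 := by
  classical
  obtain ⟨P, hP, hPL⟩ := nsec_pos_iff.mp (hL.trans_gt n.succ_pos)
  obtain ⟨e, he, rfl⟩ := exists_basis_of_pgMem hPL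
  have h₂ := (mk_mem_iff (e.ne_zero 2)).mp hP
  obtain ⟨x₀, f, hf, hsum⟩ := hS.exists_isAffineGraph hsize (by omega) hL he h₂
  have hD : ∀ s, s ∈ ({s | e 1 + s • e 2 ∈ cone S} : Finset F) ↔ e 1 + s • e 2 ∈ cone S := by
    simp
  have hDcard : #{s : F | e 1 + s • e 2 ∈ cone S} = n := by
    rw [nsec_eq_card_add_ite (linearIndependent_directions e) ((he _).mpr (by simp))
      ((he _).mpr (by simp)), if_pos h₂] at hL
    exact Nat.succ_injective hL
  refine ⟨.mk F (affineVec e x₀ (f x₀)) affineVec_ne_zero, ?_, fun R hR hRL => ?_⟩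
  · rw [pgMem_mk]
    exact affineVec_notMem he
  have hR₀ : e.coord 0 R.rep ≠ 0 := mt (he _).mpr (mt pgMem_iff_rep_mem.mpr hRL)
  obtain ⟨x, y, hxy⟩ := exists_eq_affineVec hR₀
  rw [mem_iff_rep_mem_cone, hxy, smul_mem_cone hR₀, hf] at hR
  obtain ⟨hx, rfl⟩ := hR
  set s := slope f x x₀
  have hsecant : nsec S (affineLine e s (f x - s * x)) = n + 1 := by
    refine le_antisymm (hS.nsec_le hsize _) ?_
    rw [hf.nsec_affineLine hD, HasTangentSlope.card_chord_slope
      (fun z hz => hS.exists_hasTangentSlope hsize hL he h₂ hf hD hz) hsum (by omega) (by omega)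
      hx, hDcard]
    exact Nat.le_add_right _ _
  refine ⟨_, ?_, (pgMem_mk _).mpr (affineVec_mem_affineLine.mpr ?_), hsecant⟩
  · rw [pgMem_iff_rep_mem, hxy]
    exact Submodule.smul_mem _ _ (affineVec_mem_affineLine.mpr (by ring))
  · have hslope := sub_smul_slope f x x₀
    rw [smul_eq_mul, vsub_eq_sub] at hslope
    linear_combination -hslope

end Centre

section LargeSecants

variable {F : Type*} [Field F] [Fintype F] {S : Set (PGPoint F)} {L M : PGLine F} {P : PGPoint F}
  {n : ℕ}

namespace isSemioval

lemma secant_unique (hS : isSemioval S) (hsize : S.ncard = Fintype.card F + n) (hn : 2 ≤ n)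
    (hL : nsec S L = n + 1) (hM : nsec S M = n + 1) (hP : P ∈ S) (hPL : pgMem P L)
    (hPM : pgMem P M) : L = M := by
  by_contra h
  have := hS.nsec_le_two hsize hM hP hPM hPL h
  omega

lemma exists_centre_mem_secants (hS : isSemioval S) (hsize : S.ncard = Fintype.card F + n)
    (hn : 2 ≤ n) (hn' : n ≤ 3) (hL : nsec S L = n + 1) :
    ∃ Q, ¬ pgMem Q L ∧ ∀ M, nsec S M = n + 1 → L ≠ M → pgMem Q M := by
  obtain ⟨Q, hQL, hQ⟩ := hS.exists_centre hsize hn hn' hL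
  refine ⟨Q, hQL, fun M hM hLM => ?_⟩
  obtain ⟨R, hR, hRM⟩ := nsec_pos_iff.mp (hM.trans_gt n.succ_pos)
  obtain ⟨M', hRM', hQM', hM'⟩ :=
    hQ R hR fun hRL => hLM (hS.secant_unique hsize hn hL hM hR hRL hRM)
  rwa [hS.secant_unique hsize hn hM hM' hR hRM hRM']

lemma existsUnique_secant (hS : isSemioval S) (hsize : S.ncard = Fintype.card F + n)
    (hn : 2 ≤ n) (hn' : n ≤ 3) (hL : nsec S L = n + 1) (hP : P ∈ S) :
    ∃! M, pgMem P M ∧ nsec S M = n + 1 := by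
  refine existsUnique_of_exists_of_unique ?_ fun M N hM hN =>
    hS.secant_unique hsize hn hM.2 hN.2 hP hM.1 hN.1
  by_cases hPL : pgMem P L
  · exact ⟨L, hPL, hL⟩
  · obtain ⟨Q, -, hQ⟩ := hS.exists_centre hsize hn hn' hL
    obtain ⟨M, hPM, -, hM⟩ := hQ P hP hPL
    exact ⟨M, hPM, hM⟩

lemma ncard_secants_le (hS : isSemioval S) (hsize : S.ncard = Fintype.card F + n)
    (hn : 2 ≤ n) (hn' : n ≤ 3) : {M | nsec S M = n + 1}.ncard ≤ 3 := by
  by_contra! h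
  obtain ⟨A, hA, hA₄⟩ := Set.exists_subset_card_eq (show 4 ≤ _ from h)
  obtain ⟨K, L, M, N, hKL, hKM, hKN, hLM, hLN, hMN, rfl⟩ := Set.ncard_eq_four.mp hA₄
  simp only [Set.insert_subset_iff, Set.singleton_subset_iff, Set.mem_ofPred_eq] at hA
  obtain ⟨hK, hL, hM, hN⟩ := hA
  obtain ⟨P, hPK, hP⟩ := hS.exists_centre_mem_secants hsize hn hn' hK
  obtain ⟨Q, -, hQ⟩ := hS.exists_centre_mem_secants hsize hn hn' hL
  have hPQ : P ≠ Q := fun h => hPK (h ▸ hQ K hK hKL.symm)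
  exact hMN (pgLine_eq_of_pgMem hPQ (hP M hM hKM) (hQ M hM hLM) (hP N hN hKN) (hQ N hN hLN))

lemma secants_cases (hS : isSemioval S) (hsize : S.ncard = Fintype.card F + n)
    (hn : 2 ≤ n) (hn' : n ≤ 3) (hL : nsec S L = n + 1) :
    (Fintype.card F = n + 2 ∧ {M | nsec S M = n + 1}.ncard = 2) ∨
      (Fintype.card F = 2 * n + 3 ∧ {M | nsec S M = n + 1}.ncard = 3) := by
  have hcount : (n + 1) * {M | nsec S M = n + 1}.ncard = 1 * S.ncard :=
    mul_ncard_secants_eq fun P hP => by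
      obtain ⟨M, hM, huniq⟩ := hS.existsUnique_secant hsize hn hn' hL hP
      exact Set.ncard_eq_one.mpr ⟨M, Set.eq_singleton_iff_unique_mem.mpr ⟨hM, huniq⟩⟩
  have hle := hS.ncard_secants_le hsize hn hn'
  have hF := Fintype.one_lt_card (α := F)
  rw [hsize] at hcount
  interval_cases {M | nsec S M = n + 1}.ncard <;> omega

/-- The centre of the first secant lies on the other two, but not on the first. -/
lemma not_concurrent_secants (hS : isSemioval S) (hsize : S.ncard = Fintype.card F + n)
    (hn : 2 ≤ n) (hn' : n ≤ 3) {L : Fin 3 → PGLine F} (hinj : Function.Injective L)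
    (hL : ∀ i, nsec S (L i) = n + 1) : ¬ ∃ P, ∀ i, pgMem P (L i) := by
  rintro ⟨P, hP⟩
  obtain ⟨Q, hQL, hQ⟩ := hS.exists_centre_mem_secants hsize hn hn' (hL 0)
  have hPQ : P ≠ Q := by
    rintro rfl
    exact hQL (hP 0)
  exact hinj.ne (by decide : (1 : Fin 3) ≠ 2) (pgLine_eq_of_pgMem hPQ (hP 1)
    (hQ _ (hL 1) (hinj.ne (by decide))) (hP 2) (hQ _ (hL 2) (hinj.ne (by decide))))

end isSemioval

end LargeSecants

section TwoLines

variable {F : Type*} [Field F] [Fintype F] {S : Set (PGPoint F)} {L M : PGLine F}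

lemma exists_notMem_unique {X : PGPoint F} (hL : nsec S L + 1 = Fintype.card F)
    (hXL : pgMem X L) (hX : X ∉ S) :
    ∃ P, pgMem P L ∧ P ≠ X ∧ ∀ R, pgMem R L → R ≠ X → (R ∈ S ↔ R ≠ P) := by
  have hinter := Set.ncard_inter_add_ncard_sdiff_eq_ncard {R | pgMem R L} S (Set.toFinite _)
  have hdiff := Set.ncard_sdiff_singleton_add_one (s := {R | pgMem R L} \ S) (a := X) ⟨hXL, hX⟩
    (Set.toFinite _)
  have hnsec : ({R | pgMem R L} ∩ S).ncard = nsec S L := by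
    rw [Set.inter_comm]
    rfl
  rw [ncard_pgMem_line] at hinter
  obtain ⟨P, hP⟩ := Set.ncard_eq_one.mp (by omega : (({R | pgMem R L} \ S) \ {X}).ncard = 1)
  have hmem (R : PGPoint F) : (pgMem R L ∧ R ∉ S) ∧ R ≠ X ↔ R = P := Set.ext_iff.mp hP R
  refine ⟨P, ((hmem P).mpr rfl).1.1, ((hmem P).mpr rfl).2, fun R hRL hRX => ?_⟩
  rw [ne_eq, ← hmem R]
  tauto

lemma isSymmDiffOfTwoLinesMinusTwoPoints_of_nsec (hLM : L ≠ M)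
    (hL : nsec S L + 1 = Fintype.card F) (hM : nsec S M + 1 = Fintype.card F)
    (hcover : ∀ P ∈ S, pgMem P L ∨ pgMem P M)
    (hdisj : ∀ P ∈ S, pgMem P L → ¬ pgMem P M) : isSymmDiffOfTwoLinesMinusTwoPoints S L M := by
  obtain ⟨X, hXL, hXM⟩ := exists_mem_inf_pgLine L M
  have hX : X ∉ S := fun h => hdisj X h hXL hXM
  have hmeet (R : PGPoint F) (hRL : pgMem R L) (hRM : pgMem R M) : R = X := by
    by_contra h
    exact hLM (pgLine_eq_of_pgMem h hRL hXL hRM hXM)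
  obtain ⟨P, hPL, hPX, hP⟩ := exists_notMem_unique hL hXL hX
  obtain ⟨Q, hQM, hQX, hQ⟩ := exists_notMem_unique hM hXM hX
  refine ⟨hLM, P, Q, hPL, fun h => hPX (hmeet P hPL h), hQM, fun h => hQX (hmeet Q h hQM), ?_⟩
  ext R
  have hRcover := hcover R
  have hRdisj := hdisj R
  have hRP := hP R
  have hRQ := hQ R
  simp only [Set.mem_sdiff, Set.mem_union, Set.mem_ofPred_eq, Set.mem_insert_iff,
    Set.mem_singleton_iff, not_or]
  grind

end TwoLines

section SquareClasses

variable {F : Type*} [Field F]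

lemma mem_iff_pow_card_eq {A : Finset F} {c : F} (hA : 0 < #A) (h : ∀ a ∈ A, a ^ #A = c)
    {x : F} : x ∈ A ↔ x ^ #A = c := by
  have hle : A.val ≤ nthRoots #A c :=
    (Multiset.le_iff_subset A.nodup).mpr fun a ha => (mem_nthRoots hA).mpr (h a ha)
  have heq := Multiset.eq_of_le_of_card_le hle (card_nthRoots _ _)
  rw [← mem_nthRoots hA, ← heq, mem_val]

lemma isSquare_mul_sq_iff {x t : F} (ht : t ≠ 0) : IsSquare (x * t ^ 2) ↔ IsSquare x :=
  ⟨fun h => mul_div_cancel_right₀ x (pow_ne_zero 2 ht) ▸ h.div (.sq t), fun h => h.mul (.sq t)⟩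

lemma not_isSquare_mul_iff [Finite F] {c x : F} (hc : ¬ IsSquare c) :
    ¬ IsSquare (c * x) ↔ x ≠ 0 ∧ IsSquare x := by
  classical
  have := Fintype.ofFinite F
  rcases eq_or_ne x 0 with rfl | hx
  · simp
  rw [← quadraticChar_neg_one_iff_not_isSquare, map_mul,
    quadraticChar_neg_one_iff_not_isSquare.mpr hc, neg_one_mul, neg_inj,
    quadraticChar_one_iff_isSquare hx]
  exact (and_iff_right hx).symm

variable [Fintype F]

/-- For `a ∈ A` the map `b ↦ -(a * b)⁻¹` sends `B` onto the complement of `C` in the nonzero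
elements, so the product of its values over `B` does not depend on `a`. -/
lemma pow_card_eq_pow_card {A B C : Finset F} (hA : 0 ∉ A) (hB : 0 ∉ B)
    (hC : 0 ∉ C) (hcard : #B + #C + 1 = Fintype.card F)
    (h : ∀ a ∈ A, ∀ b ∈ B, ∀ c ∈ C, a * b * c ≠ -1) {a a' : F} (ha : a ∈ A) (ha' : a' ∈ A) :
    a ^ #B = a' ^ #B := by
  classical
  have hne : ∀ {X : Finset F} {x}, 0 ∉ X → x ∈ X → x ≠ 0 := fun hX hx => ne_of_mem_of_not_mem hx hX
  have himage : ∀ a ∈ A, B.image (fun b => -(a * b)⁻¹) = (insert 0 C)ᶜ := by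
    intro a ha
    have hinj : Function.Injective fun b => -(a * b)⁻¹ := fun b b' hb =>
      mul_left_cancel₀ (hne hA ha) (inv_injective (neg_injective hb))
    refine eq_of_subset_of_card_le (image_subset_iff.mpr fun b hb => ?_) ?_
    · have hab := mul_ne_zero (hne hA ha) (hne hB hb)
      refine mem_compl.mpr (mt mem_insert.mp
        (not_or_intro (neg_ne_zero.mpr (inv_ne_zero hab)) fun hbC => ?_))
      exact h a ha b hb _ hbC (by rw [mul_neg, mul_inv_cancel₀ hab])
    · rw [card_image_of_injective _ hinj, card_compl, card_insert_of_notMem hC]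
      omega
  have hprod : ∀ a ∈ A, a⁻¹ ^ #B * ∏ b ∈ B, -b⁻¹ = ∏ x ∈ (insert 0 C)ᶜ, x := by
    intro a ha
    rw [← himage a ha, prod_image fun b _ b' _ hb =>
      mul_left_cancel₀ (hne hA ha) (inv_injective (neg_injective hb)), ← prod_const,
      ← prod_mul_distrib]
    refine prod_congr rfl fun b _ => ?_
    rw [mul_inv, mul_neg]
  have hprod₀ : ∏ b ∈ B, -b⁻¹ ≠ 0 :=
    prod_ne_zero_iff.mpr fun b hb => neg_ne_zero.mpr (inv_ne_zero (hne hB hb))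
  have hinv := mul_right_cancel₀ hprod₀ ((hprod a ha).trans (hprod a' ha').symm)
  rwa [inv_pow, inv_pow, inv_inj] at hinv

variable {A : Fin 3 → Finset F} {a : Fin 3 → F}

lemma mem_iff_isSquare_div (hA₀ : ∀ i, 0 ∉ A i) (hcard : ∀ i, 2 * #(A i) + 1 = Fintype.card F)
    (h : ∀ i, ∀ a ∈ A i, ∀ b ∈ A (i + 1), ∀ c ∈ A (i + 2), a * b * c ≠ -1)
    (ha : ∀ i, a i ∈ A i) {i : Fin 3} {x : F} : x ∈ A i ↔ x ≠ 0 ∧ IsSquare (x / a i) := by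
  rcases eq_or_ne x 0 with rfl | hx
  · simp [hA₀]
  have hchar : ringChar F ≠ 2 := fun hchar => by
    have heven := FiniteField.even_card_of_char_two hchar
    have := hcard i
    omega
  have hai : a i ≠ 0 := ne_of_mem_of_not_mem (ha i) (hA₀ i)
  have hpow : ∀ b ∈ A i, b ^ #(A i) = a i ^ #(A i) := fun b hb => by
    have hB : #(A (i + 1)) = #(A i) := by
      have h₀ := hcard i
      have h₁ := hcard (i + 1)
      omega
    rw [← hB]
    have h₁ := hcard (i + 1)
    have h₂ := hcard (i + 2)
    exact pow_card_eq_pow_card (hA₀ i) (hA₀ _) (hA₀ _) (by omega) (h i) hb (ha i)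
  have hhalf : Fintype.card F / 2 = #(A i) := by
    have := hcard i
    omega
  rw [mem_iff_pow_card_eq (card_pos.mpr ⟨_, ha i⟩) hpow,
    FiniteField.isSquare_iff hchar (div_ne_zero hx hai), hhalf, div_pow,
    div_eq_one_iff_eq (pow_ne_zero _ hai)]
  exact (and_iff_right hx).symm

lemma mul_div_mem_iff_not_isSquare (hA₀ : ∀ i, 0 ∉ A i)
    (hcard : ∀ i, 2 * #(A i) + 1 = Fintype.card F)
    (h : ∀ i, ∀ a ∈ A i, ∀ b ∈ A (i + 1), ∀ c ∈ A (i + 2), a * b * c ≠ -1)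
    (ha : ∀ i, a i ∈ A i) (i : Fin 3) (s : F) :
    s * (a (i + 2) / a (i + 1)) ∈ A i ↔ ¬ IsSquare (-s) := by
  have ha₀ (j : Fin 3) : a j ≠ 0 := ne_of_mem_of_not_mem (ha j) (hA₀ j)
  have hi := ha₀ i
  have hi₁ := ha₀ (i + 1)
  have hi₂ := ha₀ (i + 2)
  have hν : ¬ IsSquare (-(a i * a (i + 1) * a (i + 2))) := fun hsq => by
    refine h i (-(a (i + 1) * a (i + 2))⁻¹) ((mem_iff_isSquare_div hA₀ hcard h ha).mpr ⟨?_, ?_⟩)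
      _ (ha _) _ (ha _) ?_
    · simp [hi₁, hi₂]
    · have heq : -(a (i + 1) * a (i + 2))⁻¹ / a i = (-(a i * a (i + 1) * a (i + 2)))⁻¹ := by
        field_simp
      exact heq ▸ hsq.inv
    · field_simp
  rw [mem_iff_isSquare_div hA₀ hcard h ha, mul_ne_zero_iff_right (div_ne_zero hi₂ hi₁)]
  have hneg : -s = -(a i * a (i + 1) * a (i + 2)) * (s / (a i * a (i + 1) * a (i + 2))) := by
    field_simp
  have hsq : s * (a (i + 2) / a (i + 1)) / a i =
      s / (a i * a (i + 1) * a (i + 2)) * a (i + 2) ^ 2 := by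
    field_simp
  rw [hneg, not_isSquare_mul_iff hν, hsq, isSquare_mul_sq_iff hi₂,
    div_ne_zero_iff, and_iff_left (mul_ne_zero (mul_ne_zero hi hi₁) hi₂)]

end SquareClasses

section Triangle

variable {F : Type*} [Field F]

lemma linearIndependent_side (e : Module.Basis (Fin 3) F (Fin 3 → F)) (i : Fin 3) :
    LinearIndependent F ![e (i + 1), e (i + 2)] :=
  (LinearIndependent.pair_iff' (e.ne_zero _)).mpr fun a ha => by
    simpa [Finsupp.single_apply] using congrArg (e.coord (i + 2)) ha

/-- The point `⟨e (i + 1) + s e (i + 2)⟩` on the side opposite to `⟨e i⟩` of the triangle of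
reference of the basis `e`; indices are taken modulo `3`. -/
noncomputable def sidePoint (e : Module.Basis (Fin 3) F (Fin 3 → F)) (i : Fin 3) (s : F) :
    PGPoint F :=
  linePoint (linearIndependent_side e i) (some s)

lemma sidePoint_mem_iff {S : Set (PGPoint F)} {e : Module.Basis (Fin 3) F (Fin 3 → F)}
    {i : Fin 3} {s : F} : sidePoint e i s ∈ S ↔ e (i + 1) + s • e (i + 2) ∈ cone S :=
  mk_mem_iff _

lemma sidePoint_basisFun (i : Fin 3) (s : F) : sidePoint (Pi.basisFun F (Fin 3)) i s =
    ![.mk F ![0, 1, s] (vec_ne_zero_of_coord_one _ 1 rfl),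
      .mk F ![s, 0, 1] (vec_ne_zero_of_coord_one _ 2 rfl),
      .mk F ![1, s, 0] (vec_ne_zero_of_coord_one _ 0 rfl)] i := by
  fin_cases i
  all_goals
    refine (Projectivization.mk_eq_mk_iff' F _ _ _ _).mpr ⟨1, ?_⟩
    ext j
    fin_cases j <;> simp

lemma mem_blokhuisSemioval_iff {P : PGPoint F} : P ∈ blokhuisSemioval F ↔
    ∃ i s, ¬ IsSquare (-s) ∧ P = sidePoint (Pi.basisFun F (Fin 3)) i s := by
  rw [exists_comm, blokhuisSemioval, Set.mem_ofPred_eq]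
  refine exists_congr fun s => ?_
  rw [exists_and_left, Fin.exists_fin_succ, Fin.exists_fin_two]
  simp only [sidePoint_basisFun]
  rfl

lemma map_equiv_sidePoint (e f : Module.Basis (Fin 3) F (Fin 3 → F)) (i : Fin 3) (s : F) :
    Projectivization.map (σ := RingHom.id F) (e.equiv f (.refl _)).toLinearMap
      (e.equiv f (.refl _)).injective (sidePoint e i s) = sidePoint f i s := by
  simp [sidePoint, linePoint, Projectivization.map_mk]

lemma projEquivalent_blokhuisSemioval_of_mem_iff {S : Set (PGPoint F)}
    (f : Module.Basis (Fin 3) F (Fin 3 → F))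
    (hS : ∀ P, P ∈ S ↔ ∃ i s, ¬ IsSquare (-s) ∧ P = sidePoint f i s) :
    projEquivalent (blokhuisSemioval F) S := by
  refine ⟨(Pi.basisFun F (Fin 3)).equiv f (.refl _), Set.ext fun P => ?_⟩
  rw [Set.mem_image, hS P]
  constructor
  · rintro ⟨_, hQ, rfl⟩
    obtain ⟨i, s, hs, rfl⟩ := mem_blokhuisSemioval_iff.mp hQ
    exact ⟨i, s, hs, map_equiv_sidePoint _ f i s⟩
  · rintro ⟨i, s, hs, rfl⟩
    exact ⟨_, mem_blokhuisSemioval_iff.mpr ⟨i, s, hs, rfl⟩, map_equiv_sidePoint _ f i s⟩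

lemma sidePoint_unitsSMul (e : Module.Basis (Fin 3) F (Fin 3 → F)) (w : Fin 3 → Fˣ) (i : Fin 3)
    (s : F) : sidePoint (e.unitsSMul w) i s = sidePoint e i (s * (w (i + 2) / w (i + 1))) := by
  refine (Projectivization.mk_eq_mk_iff' F _ _ _ _).mpr ⟨w (i + 1), ?_⟩
  have hw : (w (i + 1) : F) * (s * (w (i + 2) / w (i + 1))) = s * w (i + 2) := by
    field_simp
  simp only [Module.Basis.unitsSMul_apply, Units.smul_def, smul_add, smul_smul, hw]

variable {e : Module.Basis (Fin 3) F (Fin 3 → F)} {L : Fin 3 → PGLine F} {S : Set (PGPoint F)}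

lemma basis_mem_iff_ne (he : ∀ i v, v ∈ (L i).val ↔ e.coord i v = 0) {i j : Fin 3} :
    e j ∈ (L i).val ↔ j ≠ i := by
  simp [he, Finsupp.single_apply]

lemma lineSpan_side (he : ∀ i v, v ∈ (L i).val ↔ e.coord i v = 0) (i : Fin 3) :
    L i = lineSpan (linearIndependent_side e i) :=
  eq_lineSpan _ ((basis_mem_iff_ne he).mpr (by simp)) ((basis_mem_iff_ne he).mpr (by simp))

lemma basis_notMem_cone (he : ∀ i v, v ∈ (L i).val ↔ e.coord i v = 0)
    (hdisj : ∀ P ∈ S, ∀ i j, pgMem P (L i) → pgMem P (L j) → i = j) (i : Fin 3) :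
    e i ∉ cone S := by
  rintro ⟨hv, hi⟩
  have hmem (j : Fin 3) (hij : i ≠ j) : pgMem (.mk F (e i) hv) (L j) :=
    (pgMem_mk hv).mpr ((basis_mem_iff_ne he).mpr hij)
  simpa using hdisj _ hi (i + 1) (i + 2) (hmem _ (by simp)) (hmem _ (by simp))

lemma exists_eq_sidePoint (he : ∀ i v, v ∈ (L i).val ↔ e.coord i v = 0)
    (hdisj : ∀ P ∈ S, ∀ i j, pgMem P (L i) → pgMem P (L j) → i = j) {i : Fin 3} {P : PGPoint F}
    (hP : P ∈ S) (hPi : pgMem P (L i)) : ∃ s, P = sidePoint e i s := by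
  rw [lineSpan_side he i] at hPi
  obtain ⟨_ | s, rfl⟩ := (range_linePoint (linearIndependent_side e i)).symm.le hPi
  · exact absurd ((mk_mem_iff _).mp hP) (basis_notMem_cone he hdisj _)
  · exact ⟨s, rfl⟩

lemma three_le_nsec [Finite F] {u v : Fin 3 → F} (h : LinearIndependent F ![u, v]) {a : F}
    (ha : a ≠ 0) (hu : u ∈ cone S) (hv : v ∈ cone S) (huv : u + a • v ∈ cone S) :
    3 ≤ nsec S (lineSpan h) := by
  classical
  have := Fintype.ofFinite F
  rw [nsec_eq_card_add_ite h (left_mem_lineSpan h) (right_mem_lineSpan h), if_pos hv]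
  refine Nat.succ_le_succ ?_
  rw [← card_pair ha.symm]
  refine card_le_card (insert_subset ?_ (singleton_subset_iff.mpr ?_))
  · rwa [mem_filter_univ, zero_smul, add_zero]
  · rwa [mem_filter_univ]

/-- If `a b c = -1`, the three points are collinear by the converse of the theorem of Menelaus. -/
lemma mul_mul_ne_neg_one [Finite F] (he : ∀ i v, v ∈ (L i).val ↔ e.coord i v = 0)
    (hle : ∀ M ∉ Set.range L, nsec S M ≤ 2) {i : Fin 3} {a b c : F}
    (ha : e (i + 1) + a • e (i + 2) ∈ cone S) (hb : e (i + 2) + b • e i ∈ cone S)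
    (hc : e i + c • e (i + 1) ∈ cone S) : a * b * c ≠ -1 := by
  intro habc
  obtain ⟨⟨ha₀, hb₀⟩, hc₀⟩ : (a ≠ 0 ∧ b ≠ 0) ∧ c ≠ 0 := by
    rw [← mul_ne_zero_iff, ← mul_ne_zero_iff, habc]
    exact neg_ne_zero.mpr one_ne_zero
  set p := e (i + 1) + a • e (i + 2) with hp
  set q := e (i + 2) + b • e i with hq
  have hcollinear : c • (p + (-a) • q) = e i + c • e (i + 1) := by
    rw [hp, hq]
    linear_combination (norm := module) (-habc) • e i
  have hp₁ : e.coord (i + 1) p = 1 := by simp [hp]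
  have hq₀ : e.coord i q = b := by simp [hq]
  have hq₁ : e.coord (i + 1) q = 0 := by simp [hq]
  have hq₂ : e.coord (i + 2) q = 1 := by simp [hq]
  have hli : LinearIndependent F ![p, q] := by
    refine LinearIndependent.pair_symm_iff.mp ((LinearIndependent.pair_iff' ?_).mpr ?_)
    · intro h
      simp [h] at hq₂
    · rintro x h
      simp [← h, hq₁] at hp₁
  have hM : lineSpan hli ∉ Set.range L := by
    rintro ⟨j, hj⟩
    have hpj := (he j _).mp (hj ▸ left_mem_lineSpan hli)
    have hqj := (he j _).mp (hj ▸ right_mem_lineSpan hli)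
    have hcases : ∀ i j : Fin 3, j = i ∨ j = i + 1 ∨ j = i + 2 := by decide
    rcases hcases i j with rfl | rfl | rfl
    · exact hb₀ (hq₀.symm.trans hqj)
    · exact one_ne_zero (hp₁.symm.trans hpj)
    · exact one_ne_zero (hq₂.symm.trans hqj)
  have hthree := three_le_nsec hli (neg_ne_zero.mpr ha₀) ha hb
    ((smul_mem_cone hc₀).mp (hcollinear ▸ hc))
  exact absurd (hle _ hM) (by omega)

variable [Fintype F]

open scoped Classical in
lemma nsec_side (he : ∀ i v, v ∈ (L i).val ↔ e.coord i v = 0)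
    (hdisj : ∀ P ∈ S, ∀ i j, pgMem P (L i) → pgMem P (L j) → i = j) (i : Fin 3) :
    nsec S (L i) = #{s : F | sidePoint e i s ∈ S} := by
  rw [nsec_eq_card_add_ite (linearIndependent_side e i)
    ((basis_mem_iff_ne he).mpr (by simp)) ((basis_mem_iff_ne he).mpr (by simp)),
    if_neg (basis_notMem_cone he hdisj _), add_zero]
  simp only [sidePoint_mem_iff]

lemma exists_unitsSMul_sidePoint_mem_iff (he : ∀ i v, v ∈ (L i).val ↔ e.coord i v = 0)
    (hcard : ∀ i, 2 * nsec S (L i) + 1 = Fintype.card F)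
    (hdisj : ∀ P ∈ S, ∀ i j, pgMem P (L i) → pgMem P (L j) → i = j)
    (hle : ∀ M ∉ Set.range L, nsec S M ≤ 2) :
    ∃ w : Fin 3 → Fˣ, ∀ i s, sidePoint (e.unitsSMul w) i s ∈ S ↔ ¬ IsSquare (-s) := by
  classical
  obtain ⟨A, hA⟩ : ∃ A : Fin 3 → Finset F, ∀ i, A i = ({s | sidePoint e i s ∈ S} : Finset F) :=
    ⟨_, fun _ => rfl⟩
  have hmem {i : Fin 3} {s : F} : s ∈ A i ↔ e (i + 1) + s • e (i + 2) ∈ cone S := by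
    rw [hA, mem_filter_univ, sidePoint_mem_iff]
  have hA₀ (i : Fin 3) : 0 ∉ A i := by
    rw [hmem, zero_smul, add_zero]
    exact basis_notMem_cone he hdisj _
  have hA_card (i : Fin 3) : 2 * #(A i) + 1 = Fintype.card F := by
    rw [← hcard i, nsec_side he hdisj, hA]
  have hA_ne (i : Fin 3) : (A i).Nonempty := by
    have := hA_card i
    have := Fintype.one_lt_card (α := F)
    rw [← card_pos]
    omega
  have hmenelaus (i : Fin 3) : ∀ a ∈ A i, ∀ b ∈ A (i + 1), ∀ c ∈ A (i + 2), a * b * c ≠ -1 := by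
    intro a ha b hb c hc
    rw [hmem] at ha hb hc
    rw [add_assoc, add_assoc] at hb hc
    simp only [Fin.reduceAdd, add_zero] at hb hc
    exact mul_mul_ne_neg_one he hle ha hb hc
  choose a ha using hA_ne
  refine ⟨fun i => .mk0 (a i) (ne_of_mem_of_not_mem (ha i) (hA₀ i)), fun i s => ?_⟩
  rw [sidePoint_unitsSMul, ← mul_div_mem_iff_not_isSquare hA₀ hA_card hmenelaus ha i s,
    hmem, sidePoint_mem_iff]
  rfl

lemma projEquivalent_blokhuisSemioval_of_triangle (hL : ¬ ∃ P, ∀ i, pgMem P (L i))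
    (hcard : ∀ i, 2 * nsec S (L i) + 1 = Fintype.card F)
    (hcover : ∀ P ∈ S, ∃ i, pgMem P (L i))
    (hdisj : ∀ P ∈ S, ∀ i j, pgMem P (L i) → pgMem P (L j) → i = j)
    (hle : ∀ M ∉ Set.range L, nsec S M ≤ 2) : projEquivalent (blokhuisSemioval F) S := by
  obtain ⟨e, he⟩ := exists_basis_of_not_concurrent hL
  obtain ⟨w, hw⟩ := exists_unitsSMul_sidePoint_mem_iff he hcard hdisj hle
  have hwe (i : Fin 3) (v : Fin 3 → F) :
      v ∈ (L i).val ↔ (e.unitsSMul w).coord i v = 0 := by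
    simp [he, Units.smul_def]
  refine projEquivalent_blokhuisSemioval_of_mem_iff (e.unitsSMul w) fun P => ⟨fun hP => ?_, ?_⟩
  · obtain ⟨i, hi⟩ := hcover P hP
    obtain ⟨s, rfl⟩ := exists_eq_sidePoint hwe hdisj hP hi
    exact ⟨i, s, (hw i s).mp hP, rfl⟩
  · rintro ⟨i, s, hs, rfl⟩
    exact (hw i s).mpr hs

end Triangle

section Classification

variable {F : Type*} [Field F] [Fintype F] {S : Set (PGPoint F)} {L M : PGLine F} {n : ℕ}

namespace isSemioval

lemma nsec_le_two_of_ne (hS : isSemioval S) (hsize : S.ncard = Fintype.card F + n)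
    (hn : 2 ≤ n) (hn' : n ≤ 3) (hL : nsec S L = n + 1) (hM : nsec S M ≠ n + 1) :
    nsec S M ≤ 2 := by
  rcases (nsec S M).eq_zero_or_pos with h₀ | hpos
  · omega
  obtain ⟨P, hP, hPM⟩ := nsec_pos_iff.mp hpos
  obtain ⟨N, ⟨hPN, hN⟩, -⟩ := hS.existsUnique_secant hsize hn hn' hL hP
  refine hS.nsec_le_two hsize hN hP hPN hPM ?_
  rintro rfl
  exact hM hN

lemma exists_isSymmDiffOfTwoLinesMinusTwoPoints (hS : isSemioval S)
    (hsize : S.ncard = Fintype.card F + n) (hn : 2 ≤ n) (hn' : n ≤ 3)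
    (hcard : Fintype.card F = n + 2) (hsec : {M | nsec S M = n + 1}.ncard = 2) :
    ∃ ℓ₁ ℓ₂ : PGLine F, isSymmDiffOfTwoLinesMinusTwoPoints S ℓ₁ ℓ₂ := by
  obtain ⟨L, M, hLM, hsec⟩ := Set.ncard_eq_two.mp hsec
  have hmem (K : PGLine F) : nsec S K = n + 1 ↔ K = L ∨ K = M := Set.ext_iff.mp hsec K
  have hL := (hmem L).mpr (.inl rfl)
  have hM := (hmem M).mpr (.inr rfl)
  refine ⟨L, M, isSymmDiffOfTwoLinesMinusTwoPoints_of_nsec hLM (by omega) (by omega)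
    (fun P hP => ?_) fun P hP hPL hPM => hLM (hS.secant_unique hsize hn hL hM hP hPL hPM)⟩
  obtain ⟨K, ⟨hPK, hK⟩, -⟩ := hS.existsUnique_secant hsize hn hn' hL hP
  rcases (hmem K).mp hK with rfl | rfl
  exacts [.inl hPK, .inr hPK]

lemma projEquivalent_blokhuisSemioval (hS : isSemioval S)
    (hsize : S.ncard = Fintype.card F + n) (hn : 2 ≤ n) (hn' : n ≤ 3)
    (hcard : Fintype.card F = 2 * n + 3) (hsec : {M | nsec S M = n + 1}.ncard = 3) :
    projEquivalent (blokhuisSemioval F) S := by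
  have equiv := Finite.equivFinOfCardEq hsec
  obtain ⟨L, hinj, hL⟩ : ∃ L : Fin 3 → PGLine F, Function.Injective L ∧
      Set.range L = {M | nsec S M = n + 1} :=
    ⟨Subtype.val ∘ equiv.symm, Subtype.val_injective.comp equiv.symm.injective, by
      rw [equiv.symm.surjective.range_comp, Subtype.range_coe]⟩
  have hnsec (i : Fin 3) : nsec S (L i) = n + 1 := hL.le (Set.mem_range_self i)
  refine projEquivalent_blokhuisSemioval_of_triangle
    (hS.not_concurrent_secants hsize hn hn' hinj hnsec) (fun i => ?_) (fun P hP => ?_)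
    (fun P hP i j hi hj => hinj (hS.secant_unique hsize hn (hnsec i) (hnsec j) hP hi hj))
    fun M hM => hS.nsec_le_two_of_ne hsize hn hn' (hnsec 0) fun h => hM (hL.ge h)
  · rw [hnsec i, hcard]
    ring
  · obtain ⟨M, ⟨hPM, hM⟩, -⟩ := hS.existsUnique_secant hsize hn hn' (hnsec 0) hP
    obtain ⟨i, rfl⟩ := hL.ge hM
    exact ⟨i, hPM⟩

lemma three_dvd_card (hS : isSemioval S) (hsize : S.ncard = Fintype.card F + 3)
    (hle : ∀ L, nsec S L ≤ 3) : 3 ∣ Fintype.card F := by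
  have := hS.three_mul_ncard_trisecants hsize hle
  omega

end isSemioval

end Classification

end

/-- Let `S` be a semioval of size `q + 3` in `PG(2,q)`, `q = p^h`.  Then one of the following
holds: `q = 5` and `S` is the symmetric difference of two lines with one further point
removed from both lines; or `q = 9` and `S` is projectively equivalent to the Blokhuis
semioval; or `p = 3` and `S` is a `(q+3,3)`-arc, i.e. every line meets `S` in at most `3`
points. -/
theorem stmt_9 {F : Type*} [Field F] [Fintype F] (p h q : ℕ) (hp : p.Prime) (hq : q = p ^ h)
    (hcard : Fintype.card F = q)
    (S : Set (PGPoint F)) (hS : isSemioval S) (hsize : S.ncard = q + 3) :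
    (q = 5 ∧ ∃ ℓ₁ ℓ₂ : PGLine F, isSymmDiffOfTwoLinesMinusTwoPoints S ℓ₁ ℓ₂) ∨
    (q = 9 ∧ projEquivalent (blokhuisSemioval F) S) ∨
    (p = 3 ∧ ∀ L : PGLine F, nsec S L ≤ 3) := by
  subst hcard
  by_cases hex : ∃ L, nsec S L = 3 + 1
  · obtain ⟨L, hL⟩ := hex
    rcases hS.secants_cases hsize (by norm_num) le_rfl hL with ⟨hF, hsec⟩ | ⟨hF, hsec⟩
    · exact .inl ⟨hF,
        hS.exists_isSymmDiffOfTwoLinesMinusTwoPoints hsize (by norm_num) le_rfl hF hsec⟩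
    · exact .inr (.inl ⟨hF,
        hS.projEquivalent_blokhuisSemioval hsize (by norm_num) le_rfl hF hsec⟩)
  · have hle (L : PGLine F) : nsec S L ≤ 3 :=
      Nat.le_of_lt_succ ((hS.nsec_le hsize L).lt_of_ne fun hL => hex ⟨L, hL⟩)
    have hdvd : 3 ∣ p := Nat.prime_three.dvd_of_dvd_pow (hq ▸ hS.three_dvd_card hsize hle)
    exact .inr (.inr ⟨((Nat.prime_dvd_prime_iff_eq Nat.prime_three hp).mp hdvd).symm, hle⟩)
end

section
/- Let S be a semioval in a projective plane of order q with |S| = q + 1 + ε. Then the number of odd-secants of S is at most |S|(1 + ε/3). -/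
/-!
Write `k l` for the number of points of `S` on the line `l`. Counting the flags `(x, l)` and the
triples `(x, y, l)` with `x ≠ y` in `S` gives
`∑ k l = (q + 1) |S|` and `∑ k l (k l - 1) = |S| (|S| - 1)`, hence
`∑ k l (k l - 2) = |S| (|S| - q - 2)`. A tangent contributes `-1` to this sum, every other
odd-secant at least `3`, and no other line contributes a negative amount, so
`3 #(odd-secants) ≤ |S| (|S| - q - 2) + 4 #(tangents)`. A semioval has at most `|S|` tangents.
-/

open Configuration Finset

section Finiteness

variable {P L : Type*} [Membership P L]

theorem finite_lines_through_of_notMem [HasPoints P L] {x : P} {l : L} (hx : x ∉ l)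
    (hl : {y : P | y ∈ l}.Finite) : {m : L | x ∈ m}.Finite := by
  have hfinite : (⋃ y ∈ {y : P | y ∈ l}, {m : L | x ∈ m ∧ y ∈ m}).Finite := by
    refine hl.biUnion fun y hy => Set.Subsingleton.finite fun m hm n hn => ?_
    exact (Nondegenerate.eq_or_eq hm.1 hm.2 hn.1 hn.2).resolve_left fun hxy => hx (hxy ▸ hy)
  refine hfinite.subset fun m hxm => ?_
  obtain ⟨y, ⟨hym, hyl⟩, -⟩ := HasPoints.existsUnique_point P L m l fun hml => hx (hml ▸ hxm)
  exact Set.mem_biUnion hyl ⟨hxm, hym⟩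

theorem finite_points_of_finite_lines_through [HasLines P L] {x : P}
    (hlines : {l : L | x ∈ l}.Finite) (hpoints : ∀ l : L, x ∈ l → {y : P | y ∈ l}.Finite) :
    Finite P := by
  refine Set.finite_univ_iff.mp (((hlines.biUnion hpoints).insert x).subset fun y _ => ?_)
  rcases eq_or_ne x y with rfl | hxy
  · exact Set.mem_insert _ _
  · obtain ⟨l, ⟨hxl, hyl⟩, -⟩ := HasLines.existsUnique_line P L x y hxy
    exact Set.mem_insert_of_mem _ (Set.mem_biUnion hxl hyl)

theorem finite_points_and_lines_of_finite_lines [ProjectivePlane P L]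
    (h : ∀ l : L, {x : P | x ∈ l}.Finite) : Finite P ∧ Finite L := by
  have hthrough (x : P) : {l : L | x ∈ l}.Finite :=
    let ⟨l, hx⟩ := Nondegenerate.exists_line (L := L) x
    finite_lines_through_of_notMem hx (h l)
  obtain ⟨x, -, -, l, -⟩ := ProjectivePlane.exists_config (P := P) (L := L)
  exact ⟨finite_points_of_finite_lines_through (hthrough x) fun l _ => h l,
    finite_points_of_finite_lines_through (P := Dual L) (L := Dual P) (x := l) (h l)
      fun x _ => hthrough x⟩

theorem order_eq_of_ncard_eq [ProjectivePlane P L] [Finite P] [Finite L] {q : ℕ} {l : L}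
    (hl : {x : P | x ∈ l}.ncard = q + 1) : ProjectivePlane.order P L = q :=
  Nat.succ_injective ((ProjectivePlane.pointCount_eq P l).symm.trans hl)

end Finiteness

section Secants

variable {P L : Type*} [Membership P L]

open scoped Classical in
/-- The number `k` for which the line `l` is a `k`-secant of `S`. -/
noncomputable def secantNumber (S : Finset P) (l : L) : ℕ :=
  #{x ∈ S | x ∈ l}

theorem ncard_sep_mem_eq_secantNumber (S : Finset P) (l : L) :
    {x ∈ (S : Set P) | x ∈ l}.ncard = secantNumber S l := by
  classical
  simp only [secantNumber, ← Set.ncard_coe_finset, coe_filter, mem_coe]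

variable (L) [Fintype L]

/-- The lines meeting `S` in exactly one point. -/
noncomputable def tangents (S : Finset P) : Finset L :=
  {l | secantNumber S l = 1}

/-- The lines meeting `S` in an odd number of points. -/
noncomputable def oddSecants (S : Finset P) : Finset L :=
  {l | Odd (secantNumber S l)}

theorem ncard_odd_secantNumber (S : Finset P) :
    {l : L | Odd (secantNumber S l)}.ncard = #(oddSecants L S) := by
  rw [oddSecants, ← Set.ncard_coe_finset, coe_filter_univ]

theorem sum_secantNumber (S : Finset P) :
    ∑ l : L, secantNumber S l = ∑ x ∈ S, lineCount L x := by
  classical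
  simp only [lineCount, Nat.card_eq_fintype_card, Fintype.card_subtype]
  exact sum_card_bipartiteAbove_eq_sum_card_bipartiteBelow fun (l : L) (x : P) => x ∈ l

theorem sum_secantNumber_mul_pred [HasLines P L] (S : Finset P) :
    ∑ l : L, secantNumber S l * (secantNumber S l - 1) = #S * (#S - 1) := by
  classical
  have hpairs (l : L) : secantNumber S l * (secantNumber S l - 1) =
      #{p ∈ S.offDiag | p.1 ∈ l ∧ p.2 ∈ l} := by
    have hoffDiag : ({x ∈ S | x ∈ l} : Finset P).offDiag =
        {p ∈ S.offDiag | p.1 ∈ l ∧ p.2 ∈ l} := by grind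
    rw [Nat.mul_sub_one, secantNumber, ← offDiag_card, hoffDiag]
  have hjoin : ∀ p ∈ S.offDiag, #{l : L | p.1 ∈ l ∧ p.2 ∈ l} = 1 := fun p hp => by
    simpa only [ExistsUnique, card_eq_one, eq_singleton_iff_unique_mem, mem_filter_univ]
      using HasLines.existsUnique_line P L p.1 p.2 (mem_offDiag.mp hp).2.2
  calc ∑ l : L, secantNumber S l * (secantNumber S l - 1)
      = ∑ l : L, #{p ∈ S.offDiag | p.1 ∈ l ∧ p.2 ∈ l} := sum_congr rfl fun l _ => hpairs l
    _ = ∑ p ∈ S.offDiag, #{l : L | p.1 ∈ l ∧ p.2 ∈ l} :=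
      sum_card_bipartiteAbove_eq_sum_card_bipartiteBelow
        fun (l : L) (p : P × P) => p.1 ∈ l ∧ p.2 ∈ l
    _ = #S * (#S - 1) := by
      rw [sum_congr rfl hjoin, ← card_eq_sum_ones, offDiag_card, Nat.mul_sub_one]

theorem three_mul_ite_odd_add_le (k : ℕ) :
    3 * (if Odd k then 1 else 0) + k ≤ k * (k - 1) + 4 * (if k = 1 then 1 else 0) := by
  rcases lt_or_ge k 4 with hk | hk
  · interval_cases k <;> decide
  · have hmul : k * 3 ≤ k * (k - 1) := by gcongr; omega
    split_ifs <;> omega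

theorem three_mul_card_oddSecants_add_sum_lineCount_le [HasLines P L] (S : Finset P) :
    3 * #(oddSecants L S) + ∑ x ∈ S, lineCount L x ≤ #S * (#S - 1) + 4 * #(tangents L S) := by
  rw [← sum_secantNumber, ← sum_secantNumber_mul_pred L, oddSecants, tangents, card_filter,
    card_filter, mul_sum, mul_sum, ← sum_add_distrib, ← sum_add_distrib]
  exact sum_le_sum fun l _ => three_mul_ite_odd_add_le (secantNumber S l)

theorem three_mul_card_oddSecants_add_order_mul_card_le [ProjectivePlane P L] [Finite P]
    (S : Finset P) :
    3 * #(oddSecants L S) + (ProjectivePlane.order P L + 2) * #S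
      ≤ #S * #S + 4 * #(tangents L S) := by
  have hcount := three_mul_card_oddSecants_add_sum_lineCount_le L S
  simp only [ProjectivePlane.lineCount_eq, sum_const, smul_eq_mul, Nat.mul_sub_one] at hcount
  have hsub := Nat.sub_add_cancel (Nat.le_mul_self #S)
  linarith

theorem card_tangents_le (S : Finset P)
    (hS : ∀ x ∈ S, {l : L | x ∈ l ∧ secantNumber S l = 1}.Subsingleton) :
    #(tangents L S) ≤ #S := by
  classical
  refine card_le_card_of_forall_subsingleton (fun l x => x ∈ l) (fun l hl => ?_) fun x hx => ?_
  · have hone : secantNumber S l = 1 := by simpa [tangents] using hl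
    obtain ⟨x, hx⟩ := card_pos.mp (hone.symm ▸ Nat.one_pos)
    exact ⟨x, mem_filter.mp hx⟩
  · exact (hS x hx).anti fun l hl => ⟨hl.2, by simpa [tangents] using hl.1⟩

end Secants

theorem stmt_10_general {P L : Type*} [Membership P L] [ProjectivePlane P L]
    (q : ℕ) (horder : ∀ l : L, {x : P | x ∈ l}.ncard = q + 1) (S : Set P)
    (hS : ∀ x ∈ S, {l : L | x ∈ l ∧ {y ∈ S | y ∈ l}.ncard = 1}.Subsingleton)
    (ε : ℚ) (hsize : (S.ncard : ℚ) = q + 1 + ε) :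
    ({l : L | Odd ({y ∈ S | y ∈ l}).ncard}.ncard : ℚ) ≤ S.ncard * (1 + ε / 3) := by
  obtain ⟨_, _⟩ := finite_points_and_lines_of_finite_lines fun l : L =>
    Set.finite_of_ncard_ne_zero (horder l ▸ q.succ_ne_zero)
  have := Fintype.ofFinite L
  lift S to Finset P using S.toFinite
  simp only [ncard_sep_mem_eq_secantNumber] at hS
  simp only [ncard_sep_mem_eq_secantNumber, ncard_odd_secantNumber, Set.ncard_coe_finset]
    at hsize ⊢
  obtain ⟨-, -, -, l, -⟩ := ProjectivePlane.exists_config (P := P) (L := L)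
  have hbound : 3 * #(oddSecants L S) + (q + 2) * #S ≤ #S * #S + 4 * #S := by
    have hcount := three_mul_card_oddSecants_add_order_mul_card_le L S
    have htangents := card_tangents_le L S hS
    rw [order_eq_of_ncard_eq (horder l)] at hcount
    linarith
  have hcast : (3 * #(oddSecants L S) + (q + 2) * #S : ℚ) ≤ #S * #S + 4 * #S := by
    exact_mod_cast hbound
  linear_combination hcast / 3 + (#S : ℚ) / 3 * hsize

/-- Let `S` be a semioval in a projective plane of order `q` (every line contains exactly
`q + 1` points) with `|S| = q + 1 + ε`.  Then the number of odd-secants of `S` is at most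
`|S| · (1 + ε/3)`. -/
theorem stmt_10 {P L : Type*} [Membership P L] [Configuration.ProjectivePlane P L]
    (q : ℕ) (horder : ∀ l : L, {x : P | x ∈ l}.ncard = q + 1)
    (S : Set P)
    -- `S` is a semioval: through each point of `S` there is exactly one tangent
    (hS : ∀ x ∈ S, ∃! l : L, x ∈ l ∧ {y ∈ S | y ∈ l}.ncard = 1)
    (ε : ℕ) (hsize : S.ncard = q + 1 + ε) :
    ({l : L | Odd ({y ∈ S | y ∈ l}).ncard}.ncard : ℚ) ≤ (S.ncard : ℚ) * (1 + (ε : ℚ) / 3) :=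
  stmt_10_general q horder S (fun x hx _ hl _ hm => (hS x hx).unique hl hm) ε
    (by exact_mod_cast hsize)
end
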